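/- arXiv:2310.19118 — 3 statements merged into one kernel-verified Lean document; each statement's English description precedes it below -/
import Mathlib

section
/- (Liouville theorem for the fractional Laplacian.) Let n ≥ 1, s ∈ (0,1), and let γ ∈ [0,1] with γ < 2s. Suppose u ∈ L¹_s(ℝⁿ) is continuous on ℝⁿ, is s-harmonic at every point of ℝⁿ, and satisfies liminf_{|x|→∞} u(x)/|x|^γ ≥ 0. Then u is constant on ℝⁿ. -/
open MeasureTheory Filter Metric Set
open scoped Topology


namespace FL

/-- Euclidean space. -/
abbrev E (n : ℕ) := EuclideanSpace ℝ (Fin n)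

/-- The weight `(1+|z|)^{-q}`. -/
noncomputable def wt {n : ℕ} (q : ℝ) (z : E n) : ℝ := (1 + ‖z‖) ^ (-q)

/-- The truncated kernel. -/
noncomputable def ker {n : ℕ} (q ε : ℝ) (z : E n) : ℝ := if ε < ‖z‖ then ‖z‖ ^ (-q) else 0

/-- Everywhere `s`-harmonic functions, `q = n + 2 s`. -/
structure SH {n : ℕ} (q : ℝ) (u : E n → ℝ) : Prop where
  cont : Continuous u
  int : Integrable (fun y => u y * wt q y)
  pv : ∀ x, Tendsto (fun ε => ∫ z, (u x - u (x + z)) * ker q ε z) (𝓝[>] 0) (𝓝 0)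

variable {n : ℕ} {q : ℝ}

lemma wt_pos (z : E n) : 0 < wt q z := by unfold wt; positivity

lemma wt_cont : Continuous (wt q : E n → ℝ) := by
  unfold wt
  refine Continuous.rpow_const (by fun_prop) ?_
  intro x; left; positivity

lemma ker_nonneg (ε : ℝ) (z : E n) : 0 ≤ ker q ε z := by
  unfold ker; split_ifs <;> positivity

lemma ker_meas (ε : ℝ) : Measurable (ker q ε : E n → ℝ) := by
  unfold ker
  refine Measurable.ite (measurableSet_lt measurable_const measurable_norm) ?_ measurable_const
  exact measurable_norm.pow_const _

lemma ker_neg (ε : ℝ) (z : E n) : ker q ε (-z) = ker q ε z := by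
  unfold ker; simp

lemma rp (hq : 0 < q) {A B c : ℝ} (hA : 0 < A) (hc : 0 < c) (hB : 0 < B) (h : A ≤ c * B) :
    B ^ (-q) ≤ c ^ q * A ^ (-q) := by
  rw [Real.rpow_neg hB.le, Real.rpow_neg hA.le]
  have h1 : A ^ q ≤ c ^ q * B ^ q := by
    rw [← Real.mul_rpow hc.le hB.le]
    exact Real.rpow_le_rpow hA.le h hq.le
  have hAq : 0 < A ^ q := by positivity
  have hBq : 0 < B ^ q := by positivity
  rw [← div_eq_mul_inv, le_div_iff₀ hAq, inv_mul_le_iff₀ hBq]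
  linarith

lemma wt_le (hq : 0 < q) {c : ℝ} (hc : 0 < c) {y z : E n} (h : 1 + ‖y‖ ≤ c * (1 + ‖z‖)) :
    wt q z ≤ c ^ q * wt q y := rp hq (by positivity) hc (by positivity) h

lemma wt_shift (hq : 0 < q) (x z : E n) : wt q z ≤ (1 + ‖x‖) ^ q * wt q (x + z) := by
  refine wt_le hq (by positivity) ?_
  have := norm_add_le x z
  nlinarith [norm_nonneg x, norm_nonneg z, mul_nonneg (norm_nonneg x) (norm_nonneg z)]

lemma ker_le_wt (hq : 0 < q) {ε : ℝ} (hε : 0 < ε) (z : E n) :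
    ker q ε z ≤ (1 + 1 / ε) ^ q * wt q z := by
  unfold ker
  split_ifs with h
  · refine rp hq (by positivity) (by positivity) (by linarith) ?_
    have : 1 ≤ 1 / ε * ‖z‖ := by
      rw [one_div, inv_mul_eq_div, one_le_div hε]; exact h.le
    linarith
  · have := wt_pos (q := q) z
    positivity

lemma int_ker (hq : 0 < q) {ε : ℝ} (hε : 0 < ε) {f : E n → ℝ} (hf : AEStronglyMeasurable f volume)
    (hi : Integrable (fun y => f y * wt q y)) : Integrable (fun z => f z * ker q ε z) := by
  refine (hi.norm.const_mul ((1 + 1 / ε) ^ q)).mono' (hf.mul (ker_meas ε).aestronglyMeasurable) ?_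
  refine Eventually.of_forall fun z => ?_
  rw [norm_mul, norm_mul, Real.norm_of_nonneg (ker_nonneg ε z), Real.norm_of_nonneg (wt_pos z).le]
  have := mul_le_mul_of_nonneg_left (ker_le_wt hq hε z) (norm_nonneg (f z))
  linarith

lemma int_wt (hq : (n : ℝ) < q) : Integrable (wt q : E n → ℝ) := by
  unfold wt
  exact integrable_one_add_norm (by simpa using hq)

lemma int_shift (hq : 0 < q) {f : E n → ℝ} (hf : Continuous f)
    (hi : Integrable (fun y => f y * wt q y)) (x : E n) :
    Integrable (fun y => f (x + y) * wt q y) := by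
  refine ((hi.comp_add_left x).norm.const_mul ((1 + ‖x‖) ^ q)).mono'
    ((hf.comp (by fun_prop)).mul wt_cont).aestronglyMeasurable ?_
  refine Eventually.of_forall fun z => ?_
  rw [norm_mul, norm_mul, Real.norm_of_nonneg (wt_pos z).le, Real.norm_of_nonneg (wt_pos _).le]
  have := mul_le_mul_of_nonneg_left (wt_shift hq x z) (norm_nonneg (f (x + z)))
  linarith

lemma SH.int_ker (hn : (n : ℝ) < q) {u : E n → ℝ} (h : SH q u) {ε : ℝ} (hε : 0 < ε) (x : E n)
    (c : ℝ) : Integrable (fun z => (c - u (x + z)) * ker q ε z) := by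
  have hq : 0 < q := lt_of_le_of_lt (Nat.cast_nonneg n) hn
  refine FL.int_ker hq hε ?_ ?_
  · exact (continuous_const.sub (h.cont.comp (by fun_prop))).aestronglyMeasurable
  · have := ((int_wt hn).const_mul c).sub (int_shift hq h.cont h.int x)
    refine this.congr (Eventually.of_forall fun z => ?_)
    simp only [Pi.sub_apply]; ring

lemma SH.neg {u : E n → ℝ} (h : SH q u) : SH q (fun x => - u x) := by
  refine ⟨h.cont.neg, ?_, ?_⟩
  · simpa using h.int.neg
  · intro x
    have := (h.pv x).neg
    rw [neg_zero] at this
    refine this.congr fun ε => ?_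
    rw [← integral_neg]
    congr 1; ext z; ring

lemma SH.add_const (hn : (n : ℝ) < q) {u : E n → ℝ} (h : SH q u) (c : ℝ) :
    SH q (fun x => u x + c) := by
  refine ⟨h.cont.add continuous_const, ?_, ?_⟩
  · refine (h.int.add ((int_wt hn).const_mul c)).congr (Eventually.of_forall fun z => ?_)
    simp only [Pi.add_apply]; ring
  · intro x
    refine (h.pv x).congr fun ε => ?_
    congr 1; ext z; ring

lemma SH.const_mul {u : E n → ℝ} (h : SH q u) (c : ℝ) :
    SH q (fun x => c * u x) := by
  refine ⟨continuous_const.mul h.cont, ?_, ?_⟩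
  · refine (h.int.const_mul c).congr (Eventually.of_forall fun z => ?_)
    simp only []; ring
  · intro x
    have := (h.pv x).const_mul c
    rw [mul_zero] at this
    refine this.congr fun ε => ?_
    rw [← integral_const_mul]
    congr 1; ext z; ring

lemma wt_scale (hq : 0 < q) {ρ : ℝ} (hρ : 0 < ρ) (x z : E n) :
    wt q z ≤ (1 + ‖x‖ + ρ) ^ q * wt q (x + ρ • z) := by
  refine wt_le hq (by positivity) ?_
  have := norm_add_le x (ρ • z)
  rw [norm_smul, Real.norm_of_nonneg hρ.le] at this
  nlinarith [norm_nonneg x, norm_nonneg z, mul_nonneg (norm_nonneg x) (norm_nonneg z)]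

lemma int_scale (hq : 0 < q) {f : E n → ℝ} (hf : Continuous f)
    (hi : Integrable (fun y => f y * wt q y)) (x : E n) {ρ : ℝ} (hρ : 0 < ρ) :
    Integrable (fun y => f (x + ρ • y) * wt q y) := by
  refine (((hi.comp_add_left x).comp_smul hρ.ne').norm.const_mul ((1 + ‖x‖ + ρ) ^ q)).mono'
    ((hf.comp (by fun_prop)).mul wt_cont).aestronglyMeasurable ?_
  refine Eventually.of_forall fun z => ?_
  rw [norm_mul, norm_mul, Real.norm_of_nonneg (wt_pos z).le, Real.norm_of_nonneg (wt_pos _).le]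
  have := mul_le_mul_of_nonneg_left (wt_scale hq hρ x z) (norm_nonneg (f (x + ρ • z)))
  linarith

lemma ker_scale {ρ ε : ℝ} (hρ : 0 < ρ) (z : E n) :
    ker q ε z = ρ ^ q * ker q (ρ * ε) (ρ • z) := by
  unfold ker
  rw [norm_smul, Real.norm_of_nonneg hρ.le]
  by_cases h : ε < ‖z‖
  · rw [if_pos h, if_pos (by gcongr), Real.mul_rpow hρ.le (norm_nonneg _), ← mul_assoc,
      ← Real.rpow_add hρ]
    simp
  · rw [if_neg h, if_neg (by rw [mul_lt_mul_iff_right₀ hρ]; exact h)]; simp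

lemma SH.scale (hq : 0 < q) {u : E n → ℝ} (h : SH q u) (x₀ : E n) {ρ : ℝ} (hρ : 0 < ρ) :
    SH q (fun x => u (x₀ + ρ • x)) := by
  refine ⟨h.cont.comp (by fun_prop), int_scale hq h.cont h.int x₀ hρ, ?_⟩
  intro x
  have ht : Tendsto (fun ε : ℝ => ρ * ε) (𝓝[>] 0) (𝓝[>] 0) := by
    refine tendsto_nhdsWithin_iff.2 ⟨?_, ?_⟩
    · have : Tendsto (fun ε : ℝ => ρ * ε) (𝓝 0) (𝓝 (ρ * 0)) := (continuous_const_mul ρ).tendsto 0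
      rw [mul_zero] at this
      exact this.mono_left nhdsWithin_le_nhds
    · filter_upwards [self_mem_nhdsWithin] with ε hε
      exact mul_pos hρ hε
  have := (((h.pv (x₀ + ρ • x)).comp ht).const_mul (|(ρ ^ n)⁻¹| * ρ ^ q))
  rw [mul_zero] at this
  refine this.congr fun ε => ?_
  have e := Measure.integral_comp_smul (volume : Measure (E n))
    (fun z => (u (x₀ + ρ • x) - u (x₀ + ρ • x + z)) * ker q (ρ * ε) z) ρ
  simp only [finrank_euclideanSpace, Fintype.card_fin, smul_eq_mul] at e
  simp only [Function.comp]
  rw [mul_right_comm, ← e, mul_comm, ← integral_const_mul]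
  congr 1; ext z
  rw [ker_scale hρ z, smul_add, add_assoc]
  ring

lemma tendsto_trunc (hn : 1 ≤ n) {f : E n → ℝ} (hf : Integrable f) :
    Tendsto (fun ε : ℝ => ∫ z, if ε < ‖z‖ then f z else 0) (𝓝[>] 0) (𝓝 (∫ z, f z)) := by
  have : Nonempty (Fin n) := ⟨⟨0, hn⟩⟩
  have : Nontrivial (E n) := inferInstance
  refine tendsto_integral_filter_of_dominated_convergence (fun z => ‖f z‖) ?_ ?_ hf.norm ?_
  · refine Eventually.of_forall fun ε => ?_
    have : (fun z : E n => if ε < ‖z‖ then f z else 0) = indicator {z | ε < ‖z‖} f := by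
      ext z; simp [indicator]
    rw [this]
    exact hf.aestronglyMeasurable.indicator (measurableSet_lt measurable_const measurable_norm)
  · refine Eventually.of_forall fun ε => Eventually.of_forall fun z => ?_
    show ‖(if ε < ‖z‖ then f z else 0)‖ ≤ ‖f z‖
    split_ifs <;> simp
  · have h0 : ∀ᵐ z : E n, z ≠ 0 := Measure.ae_ne volume 0
    filter_upwards [h0] with z hz
    refine tendsto_const_nhds.congr' ?_
    have : Iio ‖z‖ ∈ 𝓝[>] (0:ℝ) := mem_nhdsWithin_of_mem_nhds (Iio_mem_nhds (norm_pos_iff.2 hz))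
    filter_upwards [this] with ε hε
    have hε : ε < ‖z‖ := hε
    rw [if_pos hε]

/-- The comparison function: paraboloid near the origin, constant away. -/
noncomputable def pb (a : E n) (z : E n) : ℝ :=
  if ‖z‖ < 1 / 2 then inner ℝ a z + ‖z‖ ^ 2 else 1

lemma pb_meas (a : E n) : Measurable (pb a) := by
  unfold pb
  refine Measurable.ite (measurableSet_lt measurable_norm measurable_const) ?_ measurable_const
  fun_prop

lemma pb_int (hn : (n : ℝ) < q) (a : E n) {ε : ℝ} (hε : 0 < ε) :
    Integrable (fun z => pb a z * ker q ε z) := by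
  have hq : 0 < q := lt_of_le_of_lt (Nat.cast_nonneg n) hn
  refine FL.int_ker hq hε (pb_meas a).aestronglyMeasurable ?_
  refine ((int_wt hn).const_mul (‖a‖ + 1)).mono'
    ((pb_meas a).aestronglyMeasurable.mul wt_cont.aestronglyMeasurable) ?_
  refine Eventually.of_forall fun z => ?_
  rw [norm_mul, Real.norm_of_nonneg (wt_pos z).le]
  refine mul_le_mul_of_nonneg_right ?_ (wt_pos z).le
  unfold pb
  split_ifs with h
  · refine (norm_add_le _ _).trans ?_
    have := abs_real_inner_le_norm a z
    rw [Real.norm_eq_abs, norm_pow, norm_norm]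
    nlinarith [norm_nonneg a, norm_nonneg z]
  · simp

lemma int_quad (hn1 : 1 ≤ n) (hn2 : q < n + 2) :
    Integrable (fun z : E n => if ‖z‖ < 1 / 2 then ‖z‖ ^ (2 - q) else 0) := by
  have : Nonempty (Fin n) := ⟨⟨0, hn1⟩⟩
  have := (integrable_fun_norm_addHaar (E := E n) volume
    (f := fun r : ℝ => if r < 1 / 2 then r ^ (2 - q) else 0)).2
  refine this ?_
  have h1 : IntegrableOn (fun y : ℝ => y ^ ((n : ℝ) + 1 - q)) (Ioo 0 (1 / 2)) := by
    rw [intervalIntegral.integrableOn_Ioo_rpow_iff (by norm_num)]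
    linarith
  have h2 : IntegrableOn (indicator (Ioo 0 (1 / 2)) (fun y : ℝ => y ^ ((n : ℝ) + 1 - q))) (Ioi 0) :=
    (h1.integrable_indicator measurableSet_Ioo).integrableOn
  refine h2.congr_fun ?_ measurableSet_Ioi
  intro y hy
  have hy : 0 < y := hy
  simp only [finrank_euclideanSpace, Fintype.card_fin, smul_eq_mul, indicator, mem_Ioo, hy,
    true_and]
  split_ifs
  · rw [← Real.rpow_natCast, ← Real.rpow_add hy, Nat.cast_sub hn1]
    congr 1; push_cast; ring
  · simp

lemma pb_bound (hn1 : 1 ≤ n) (hn : (n : ℝ) < q) (hn2 : q < n + 2) :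
    ∃ C : ℝ, 0 ≤ C ∧ ∀ (a : E n) (ε : ℝ), 0 < ε → ∫ z, pb a z * ker q ε z ≤ C := by
  have hq : 0 < q := lt_of_le_of_lt (Nat.cast_nonneg n) hn
  set M : E n → ℝ := fun z => (if ‖z‖ < 1 / 2 then ‖z‖ ^ (2 - q) else 0) + 3 ^ q * wt q z with hM
  have hMi : Integrable M := (int_quad hn1 hn2).add ((int_wt hn).const_mul _)
  refine ⟨∫ z, M z, ?_, ?_⟩
  · refine integral_nonneg fun z => ?_
    have := wt_pos (q := q) z
    simp only [hM, Pi.zero_apply]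
    split_ifs <;> positivity
  · intro a ε hε
    have h1 : ∫ z, pb a z * ker q ε z = ∫ z, pb (-a) z * ker q ε z := by
      rw [← integral_neg_eq_self]
      congr 1; ext z
      rw [ker_neg]; unfold pb; simp
    have h2 : ∫ z, pb a z * ker q ε z + pb (-a) z * ker q ε z ≤ ∫ z, 2 * M z := by
      refine integral_mono ((pb_int hn a hε).add (pb_int hn (-a) hε)) (hMi.const_mul 2) ?_
      intro z
      simp only [hM]
      rw [← add_mul]
      unfold pb
      by_cases h : ‖z‖ < 1 / 2
      · simp only [h, if_true, inner_neg_left]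
        have hw := wt_pos (q := q) z
        have : 0 ≤ 3 ^ q * wt q z := by positivity
        have h3 : ‖z‖ ^ 2 * ker q ε z ≤ ‖z‖ ^ (2 - q) := by
          unfold ker
          split_ifs with h4
          · have hz : 0 < ‖z‖ := hε.trans h4
            rw [← Real.rpow_natCast, ← Real.rpow_add hz]
            apply le_of_eq; congr 1
          · simp; positivity
        linarith
      · simp only [h, if_false]
        have hk : ker q ε z ≤ 3 ^ q * wt q z := by
          unfold ker
          have hw := wt_pos (q := q) z
          split_ifs with h4
          · exact rp hq (by positivity) (by positivity) (by linarith) (by linarith)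
          · positivity
        linarith
    rw [integral_add (pb_int hn a hε) (pb_int hn (-a) hε), ← h1, integral_const_mul] at h2
    linarith

end FL


namespace FL
variable {n : ℕ} {q : ℝ}

lemma int_pos {u : E n → ℝ} (hc : Continuous u) (hi : Integrable (fun y => u y * wt q y)) :
    Integrable (fun y => max (u y) 0 * wt q y) := by
  refine hi.norm.mono' ((hc.max continuous_const).mul wt_cont).aestronglyMeasurable ?_
  refine Eventually.of_forall fun z => ?_
  rw [norm_mul, norm_mul]
  refine mul_le_mul_of_nonneg_right ?_ (norm_nonneg _)
  rw [Real.norm_of_nonneg (le_max_right _ _)]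
  exact max_le (le_abs_self _) (abs_nonneg _)

lemma int_abs {u : E n → ℝ} (hi : Integrable (fun y => u y * wt q y)) :
    Integrable (fun y => |u y| * wt q y) := by
  refine hi.norm.congr (Eventually.of_forall fun z => ?_)
  simp only [norm_mul, Real.norm_eq_abs, abs_of_pos (wt_pos z)]

/-- Weak Harnack inequality. -/
lemma weak_harnack (hn1 : 1 ≤ n) (hn : (n : ℝ) < q) (hn2 : q < n + 2) :
    ∃ C : ℝ, 0 < C ∧ ∀ v : E n → ℝ, SH q v → (∀ y, ‖y‖ ≤ 1 → 0 ≤ v y) →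
      ∫ y, max (v y) 0 * wt q y ≤ C * (v 0 + ∫ y, max (-v y) 0 * wt q y) := by
  have hq : 0 < q := lt_of_le_of_lt (Nat.cast_nonneg n) hn
  obtain ⟨C5, hC5, hpb⟩ := pb_bound hn1 hn hn2
  have hIw : 0 ≤ ∫ y : E n, wt q y := integral_nonneg fun y => (wt_pos y).le
  have h4 : (1:ℝ) ≤ 4 ^ q := Real.one_le_rpow (by norm_num) hq.le
  refine ⟨(∫ y : E n, wt q y) + 4 * C5 + 4 ^ q, by positivity, ?_⟩
  intro v hv hpos
  set t := v 0 with ht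
  have ht0 : 0 ≤ t := hpos 0 (by simp)
  obtain ⟨x₁, hx₁, hmin⟩ := (isCompact_closedBall (0 : E n) (1/2)).exists_isMinOn
    ⟨0, by simp⟩ (f := fun x => v x - t * (1 - 4 * ‖x‖ ^ 2))
    ((hv.cont.sub (by fun_prop)).continuousOn)
  have hx1 : ‖x₁‖ ≤ 1 / 2 := by simpa using hx₁
  have hmin' : ∀ y : E n, ‖y‖ ≤ 1 / 2 →
      v x₁ - t * (1 - 4 * ‖x₁‖ ^ 2) ≤ v y - t * (1 - 4 * ‖y‖ ^ 2) := fun y hy =>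
    hmin (show y ∈ closedBall 0 (1/2) by simpa using hy)
  have hm0 : v x₁ - t * (1 - 4 * ‖x₁‖ ^ 2) ≤ 0 := by
    have := hmin' 0 (by simp)
    simpa [← ht] using this
  have hφ1 : 0 ≤ 1 - 4 * ‖x₁‖ ^ 2 := by nlinarith [norm_nonneg x₁]
  set F : E n → ℝ := fun y => (max (v y) 0 - t - 4 ^ q * max (-v y) 0) * wt q y with hF
  have hi1 := int_pos hv.cont hv.int
  have hi2 : Integrable (fun y => max (-v y) 0 * wt q y) := int_pos hv.neg.cont hv.neg.int
  have hi3 : Integrable (wt q : E n → ℝ) := int_wt hn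
  have hFi : Integrable F := by
    refine ((hi1.sub (hi3.const_mul t)).sub (hi2.const_mul (4 ^ q))).congr
      (Eventually.of_forall fun z => ?_)
    simp only [Pi.sub_apply, hF]; ring
  have hFI : ∫ y, F y = (∫ y, max (v y) 0 * wt q y) - t * (∫ y : E n, wt q y)
      - 4 ^ q * ∫ y, max (-v y) 0 * wt q y := by
    have e1 : ∫ y, (max (v y) 0 * wt q y - t * wt q y) =
        (∫ y, max (v y) 0 * wt q y) - ∫ y, t * wt q y := integral_sub hi1 (hi3.const_mul t)
    have e2 : ∫ y, ((max (v y) 0 * wt q y - t * wt q y) - 4 ^ q * (max (-v y) 0 * wt q y)) =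
        (∫ y, (max (v y) 0 * wt q y - t * wt q y)) - ∫ y, 4 ^ q * (max (-v y) 0 * wt q y) :=
      integral_sub (hi1.sub (hi3.const_mul t)) (hi2.const_mul (4 ^ q))
    rw [← integral_const_mul, ← integral_const_mul, ← e1, ← e2]
    congr 1; ext z; simp only [hF]; ring
  have hpt : ∀ ε : ℝ, 0 < ε → ∀ z : E n, (if ε < ‖z‖ then F (x₁ + z) else 0) ≤
      - ((v x₁ - v (x₁ + z)) * ker q ε z) + 4 * t * (pb ((2:ℝ) • x₁) z * ker q ε z) := by
    intro ε hε z
    unfold ker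
    split_ifs with hz
    swap
    · simp
    have hz0 : 0 < ‖z‖ := hε.trans hz
    set y := x₁ + z with hy
    set φ : ℝ := if ‖y‖ ≤ 1 / 2 then 1 - 4 * ‖y‖ ^ 2 else 0 with hφ
    have hφ0 : 0 ≤ φ := by
      rw [hφ]; split_ifs
      · nlinarith [norm_nonneg y]
      · exact le_rfl
    have hφle : φ ≤ 1 := by
      rw [hφ]; split_ifs
      · nlinarith [norm_nonneg y]
      · norm_num
    have hφge : 1 - 4 * ‖y‖ ^ 2 ≤ φ := by
      rw [hφ]; split_ifs with h
      · exact le_rfl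
      · push Not at h; nlinarith [norm_nonneg y]
    set w : ℝ := v y - v x₁ + t * (1 - 4 * ‖x₁‖ ^ 2 - φ) with hw
    have hnz : ‖z‖ ≤ 1 + ‖y‖ := by
      have : z = y - x₁ := by rw [hy]; abel
      calc ‖z‖ = ‖y - x₁‖ := by rw [this]
        _ ≤ ‖y‖ + ‖x₁‖ := norm_sub_le _ _
        _ ≤ 1 + ‖y‖ := by linarith
    have hny : ‖y‖ ≤ 1/2 + ‖z‖ := by
      have := norm_add_le x₁ z
      rw [← hy] at this; linarith
    have hκ : wt q y ≤ ‖z‖ ^ (-q) :=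
      Real.rpow_le_rpow_of_nonpos hz0 hnz (by linarith)
    have hwy := wt_pos (q := q) y
    -- step 1
    have s1 : F y ≤ w * ‖z‖ ^ (-q) := by
      simp only [hF]
      by_cases hy1 : ‖y‖ ≤ 1
      · have hv0 := hpos y hy1
        rw [max_eq_left hv0, max_eq_right (by linarith : -v y ≤ 0)]
        have hw0 : 0 ≤ w := by
          by_cases hy2 : ‖y‖ ≤ 1 / 2
          · have := hmin' y hy2
            rw [hw, hφ, if_pos hy2]; linarith
          · rw [hw, hφ, if_neg hy2]; linarith
        have hwv : v y - t ≤ w := by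
          rw [hw]; nlinarith
        calc (v y - t - 4 ^ q * 0) * wt q y ≤ w * wt q y := by
              refine mul_le_mul_of_nonneg_right (by linarith) hwy.le
          _ ≤ w * ‖z‖ ^ (-q) := mul_le_mul_of_nonneg_left hκ hw0
      · push Not at hy1
        have hwv : v y ≤ w := by
          rw [hw, hφ, if_neg (by linarith)]; linarith
        rcases le_total 0 (v y) with h | h
        · rw [max_eq_left h, max_eq_right (by linarith : -v y ≤ 0)]
          calc (v y - t - 4 ^ q * 0) * wt q y ≤ v y * wt q y := by
                refine mul_le_mul_of_nonneg_right (by linarith) hwy.le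
            _ ≤ v y * ‖z‖ ^ (-q) := mul_le_mul_of_nonneg_left hκ h
            _ ≤ w * ‖z‖ ^ (-q) := mul_le_mul_of_nonneg_right hwv (by positivity)
        · rw [max_eq_right h, max_eq_left (by linarith : 0 ≤ -v y)]
          have hk4 : ‖z‖ ^ (-q) ≤ 4 ^ q * wt q y :=
            rp hq (by positivity) (by norm_num) hz0 (by linarith)
          have e1 : (-v y) * ‖z‖ ^ (-q) ≤ (-v y) * (4 ^ q * wt q y) :=
            mul_le_mul_of_nonneg_left hk4 (by linarith)
          have e2 : v y * ‖z‖ ^ (-q) ≤ w * ‖z‖ ^ (-q) :=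
            mul_le_mul_of_nonneg_right hwv (by positivity)
          have e3 : 0 ≤ t * wt q y := by positivity
          linarith
    have s2 : 1 - 4 * ‖x₁‖ ^ 2 - φ ≤ 4 * pb ((2:ℝ) • x₁) z := by
      unfold pb
      split_ifs with h
      · have : ‖y‖ ^ 2 = ‖x₁‖ ^ 2 + 2 * inner ℝ x₁ z + ‖z‖ ^ 2 := by
          rw [hy]; exact norm_add_sq_real _ _
        rw [inner_smul_left]
        simp only [conj_trivial]
        linarith
      · nlinarith [norm_nonneg x₁]
    have s3 : w * ‖z‖ ^ (-q) ≤ (v y - v x₁ + t * (4 * pb ((2:ℝ) • x₁) z)) * ‖z‖ ^ (-q) := by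
      refine mul_le_mul_of_nonneg_right ?_ (by positivity)
      rw [hw]
      have := mul_le_mul_of_nonneg_left s2 ht0
      linarith
    linarith
  have htrunc : ∀ ε : ℝ, 0 < ε → ∫ z, (if ε < ‖z‖ then F (x₁ + z) else 0) ≤
      - (∫ z, (v x₁ - v (x₁ + z)) * ker q ε z) + 4 * t * C5 := by
    intro ε hε
    have hA := (hv.int_ker hn hε x₁ (v x₁))
    have hB := (pb_int hn ((2:ℝ) • x₁) hε).const_mul (4 * t)
    have hT : Integrable (fun z => if ε < ‖z‖ then F (x₁ + z) else 0) := by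
      have : (fun z : E n => if ε < ‖z‖ then F (x₁ + z) else 0)
          = indicator {z | ε < ‖z‖} (fun z => F (x₁ + z)) := by
        ext z; simp [indicator]
      rw [this]
      exact (hFi.comp_add_left x₁).indicator (measurableSet_lt measurable_const measurable_norm)
    have h1 := integral_mono hT (hA.neg.add hB) (hpt ε hε)
    have h2 : ∫ z, (-((v x₁ - v (x₁ + z)) * ker q ε z)
        + 4 * t * (pb ((2:ℝ) • x₁) z * ker q ε z)) =
        - (∫ z, (v x₁ - v (x₁ + z)) * ker q ε z)
        + 4 * t * ∫ z, pb ((2:ℝ) • x₁) z * ker q ε z := by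
      rw [← integral_neg, ← integral_const_mul]
      exact integral_add hA.neg hB
    have h3 := mul_le_mul_of_nonneg_left (hpb ((2:ℝ) • x₁) ε hε) (by positivity : 0 ≤ 4 * t)
    have h1' := h1.trans_eq h2
    linarith
  have hlim1 := tendsto_trunc hn1 (hFi.comp_add_left x₁)
  rw [integral_add_left_eq_self] at hlim1
  have hlim2 := ((hv.pv x₁).neg).add_const (4 * t * C5)
  have hfin : ∫ y, F y ≤ -0 + 4 * t * C5 := by
    refine le_of_tendsto_of_tendsto hlim1 hlim2 ?_
    filter_upwards [self_mem_nhdsWithin] with ε hε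
    exact htrunc ε hε
  have hneg : 0 ≤ ∫ y, max (-v y) 0 * wt q y :=
    integral_nonneg fun y => mul_nonneg (le_max_right _ _) (wt_pos y).le
  rw [hFI] at hfin
  nlinarith [mul_nonneg hIw hneg, mul_nonneg hC5 hneg]

set_option maxHeartbeats 1000000 in
/-- Local boundedness. -/
lemma sup_bound (hn1 : 1 ≤ n) (hn : (n : ℝ) < q) (hn2 : q < n + 2) :
    ∃ C : ℝ, 0 < C ∧ ∀ v : E n → ℝ, SH q v → ∫ y, |v y| * wt q y ≤ 1 →
      ∀ x, ‖x‖ ≤ 2 → v x ≤ C := by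
  have hq : 0 < q := lt_of_le_of_lt (Nat.cast_nonneg n) hn
  obtain ⟨C1, hC1, hwh⟩ := weak_harnack hn1 hn hn2
  have hwi : Integrable (wt q : E n → ℝ) := int_wt hn
  set I : ℝ := ∫ y : E n, wt q y with hI
  have hIpos : 0 < I := by
    rw [hI, integral_pos_iff_support_of_nonneg (fun y => (wt_pos y).le) hwi]
    have : Function.support (wt q : E n → ℝ) = univ := by
      ext y; simp [(wt_pos (q := q) y).ne']
    rw [this]; simp [NeZero.ne]
  obtain ⟨l, hl0, hl1, hl⟩ : ∃ l : ℝ, 0 < l ∧ l < 1 ∧ C1 * (((1 - l) ^ n)⁻¹ - 1) ≤ I / 2 := by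
    have hc : ContinuousAt (fun l : ℝ => C1 * (((1 - l) ^ n)⁻¹ - 1)) 0 := by
      refine ContinuousAt.mul continuousAt_const (ContinuousAt.sub (ContinuousAt.inv₀ ?_ ?_) ?_)
      · fun_prop
      · simp
      · exact continuousAt_const
    have h1 : ∀ᶠ l in 𝓝[>] (0:ℝ), C1 * (((1 - l) ^ n)⁻¹ - 1) < I / 2 := by
      have := hc.eventually_lt_const (u := I / 2) (by simp; exact hIpos)
      exact this.filter_mono nhdsWithin_le_nhds
    have h2 : ∀ᶠ l in 𝓝[>] (0:ℝ), l < 1 :=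
      mem_nhdsWithin_of_mem_nhds (Iio_mem_nhds one_pos)
    obtain ⟨l, ⟨ha, hb⟩, hc⟩ := ((h1.and h2).and self_mem_nhdsWithin).exists
    exact ⟨l, hc, hb, ha.le⟩
  refine ⟨2 / I * (C1 + 1) * (5 ^ q * (l ^ n)⁻¹), by positivity, ?_⟩
  set D : ℝ := 2 / I * (C1 + 1) * (5 ^ q * (l ^ n)⁻¹) with hD
  have hDpos : 0 < D := by positivity
  intro v hv hv1 x hx
  by_contra hcon
  push Not at hcon
  obtain ⟨x₀, hx₀, hmax⟩ := (isCompact_closedBall (0 : E n) 4).exists_isMaxOn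
    ⟨0, by simp⟩ (f := fun x => (4 - ‖x‖) ^ n * v x)
    (((by fun_prop : Continuous fun x : E n => (4 - ‖x‖) ^ n).mul hv.cont).continuousOn)
  have hx0 : ‖x₀‖ ≤ 4 := by simpa using hx₀
  have hmax' : ∀ y : E n, ‖y‖ ≤ 4 → (4 - ‖y‖) ^ n * v y ≤ (4 - ‖x₀‖) ^ n * v x₀ := fun y hy =>
    hmax (show y ∈ closedBall 0 4 by simpa using hy)
  set d := 4 - ‖x₀‖ with hd
  have hQx : D < d ^ n * v x₀ := by
    have h1 := hmax' x (by linarith)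
    have h2 : (1:ℝ) ≤ (4 - ‖x‖) ^ n := one_le_pow₀ (by linarith)
    have h3 : 0 ≤ v x := by linarith
    nlinarith
  have hd0 : 0 ≤ d := by rw [hd]; linarith
  have hdn : 0 ≤ d ^ n := by positivity
  have hvx0 : 0 < v x₀ := by
    by_contra h; push Not at h; nlinarith
  have hdpos : 0 < d := by
    rcases hd0.lt_or_eq with h | h
    · exact h
    · rw [← h, zero_pow (by omega)] at hQx; linarith
  have hd4 : d ≤ 4 := by rw [hd]; linarith [norm_nonneg x₀]
  set ρ := l * d with hρ
  have hρ0 : 0 < ρ := by positivity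
  have hρ4 : ρ ≤ 4 := by nlinarith
  set a : ℝ := ((1 - l) ^ n)⁻¹ with ha
  have hl1' : 0 < 1 - l := by linarith
  have ha1 : 1 ≤ a := by
    rw [ha]; exact (one_le_inv₀ (by positivity)).2 (pow_le_one₀ hl1'.le (by linarith))
  set f : E n → ℝ := fun z => v (x₀ + ρ • z) with hf
  have hfS : SH q f := hv.scale hq x₀ hρ0
  have hwS : SH q (fun z => -f z + a * v x₀) := hfS.neg.add_const hn _
  have key := hwh _ hwS (by
    intro z hz
    set y := x₀ + ρ • z with hy
    have hny : ‖y‖ ≤ ‖x₀‖ + ρ := by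
      refine (norm_add_le _ _).trans ?_
      rw [norm_smul, Real.norm_of_nonneg hρ0.le]
      nlinarith
    have h1 : (1 - l) * d ≤ 4 - ‖y‖ := by rw [hρ] at hny; linarith
    have h2 := hmax' y (by nlinarith)
    show 0 ≤ -v y + a * v x₀
    rcases le_total (v y) 0 with h | h
    · have : 0 ≤ a * v x₀ := by positivity
      linarith
    · have h3 : ((1 - l) * d) ^ n * v y ≤ d ^ n * v x₀ :=
        (mul_le_mul_of_nonneg_right (pow_le_pow_left₀ (by positivity) h1 n) h).trans h2
      rw [mul_pow, mul_right_comm, mul_comm] at h3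
      have h4 : (1 - l) ^ n * v y ≤ v x₀ := le_of_mul_le_mul_left h3 (by positivity)
      have h5 : v y ≤ a * v x₀ := by
        rw [ha, inv_mul_eq_div, le_div_iff₀ (by positivity)]; linarith
      linarith)
  set J : ℝ := ∫ z, |f z| * wt q z with hJ
  have hfa : Integrable (fun z => |f z| * wt q z) := int_abs hfS.int
  have hL : a * v x₀ * I - J ≤ ∫ y, max (-f y + a * v x₀) 0 * wt q y := by
    rw [hI, hJ, ← integral_const_mul, ← integral_sub (hwi.const_mul _) hfa]
    refine integral_mono ((hwi.const_mul _).sub hfa) (int_pos hwS.cont hwS.int) fun z => ?_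
    show a * v x₀ * wt q z - |f z| * wt q z ≤ max (-f z + a * v x₀) 0 * wt q z
    rw [← sub_mul]
    refine mul_le_mul_of_nonneg_right ?_ (wt_pos z).le
    refine le_trans ?_ (le_max_left _ _)
    linarith [le_abs_self (f z)]
  have hR : ∫ y, max (-(-f y + a * v x₀)) 0 * wt q y ≤ J := by
    refine integral_mono (int_pos hwS.neg.cont hwS.neg.int) hfa fun z => ?_
    refine mul_le_mul_of_nonneg_right ?_ (wt_pos z).le
    refine max_le ?_ (abs_nonneg _)
    have : 0 ≤ a * v x₀ := by positivity
    linarith [le_abs_self (f z)]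
  have hf0 : f 0 = v x₀ := by simp [hf]
  have hJle : J ≤ (ρ ^ n)⁻¹ * 5 ^ q := by
    have h1 : J ≤ ∫ z, 5 ^ q * (|v (x₀ + ρ • z)| * wt q (x₀ + ρ • z)) := by
      have hvi := int_abs hv.int
      refine integral_mono hfa (((hvi.comp_add_left x₀).comp_smul hρ0.ne').const_mul _) fun z => ?_
      show |v (x₀ + ρ • z)| * wt q z ≤ 5 ^ q * (|v (x₀ + ρ • z)| * wt q (x₀ + ρ • z))
      have hw : wt q z ≤ 5 ^ q * wt q (x₀ + ρ • z) := by
        refine wt_le hq (by norm_num) ?_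
        have := norm_add_le x₀ (ρ • z)
        rw [norm_smul, Real.norm_of_nonneg hρ0.le] at this
        nlinarith [norm_nonneg z]
      have := mul_le_mul_of_nonneg_left hw (abs_nonneg (v (x₀ + ρ • z)))
      linarith
    have e := Measure.integral_comp_smul (volume : Measure (E n))
      (fun z => |v (x₀ + z)| * wt q (x₀ + z)) ρ
    rw [integral_add_left_eq_self (fun z => |v z| * wt q z)] at e
    simp only [finrank_euclideanSpace, Fintype.card_fin, smul_eq_mul] at e
    rw [integral_const_mul, e, abs_of_pos (by positivity)] at h1
    have h2 : (ρ ^ n)⁻¹ * ∫ y, |v y| * wt q y ≤ (ρ ^ n)⁻¹ * 1 :=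
      mul_le_mul_of_nonneg_left hv1 (by positivity)
    have h3 := mul_le_mul_of_nonneg_left h2 (by positivity : (0:ℝ) ≤ 5 ^ q)
    linarith
  rw [hf0] at key
  have k1 : a * v x₀ * I - J ≤ C1 * (-v x₀ + a * v x₀ + J) := by
    refine hL.trans (key.trans ?_)
    refine mul_le_mul_of_nonneg_left ?_ hC1.le
    linarith
  have k2 : C1 * (a - 1) * v x₀ ≤ I / 2 * v x₀ := mul_le_mul_of_nonneg_right hl hvx0.le
  have k3 : v x₀ * I ≤ a * v x₀ * I := by
    have : 0 ≤ v x₀ * I := by positivity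
    nlinarith
  have k4 : v x₀ * (I / 2) ≤ (C1 + 1) * J := by linarith
  have k5 : v x₀ * (I / 2) ≤ (C1 + 1) * ((ρ ^ n)⁻¹ * 5 ^ q) :=
    k4.trans (mul_le_mul_of_nonneg_left hJle (by linarith))
  have k6 : d ^ n * v x₀ ≤ D := by
    have hdn' : 0 < d ^ n := by positivity
    have := mul_le_mul_of_nonneg_left k5 (by positivity : 0 ≤ d ^ n * (2 / I))
    have e1 : d ^ n * (2 / I) * (v x₀ * (I / 2)) = d ^ n * v x₀ := by
      clear_value I d D ρ a J f
      field_simp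
    have e2 : d ^ n * (2 / I) * ((C1 + 1) * ((ρ ^ n)⁻¹ * 5 ^ q)) = D := by
      rw [hD, hρ, mul_pow]; field_simp
    linarith
  linarith

end FL


namespace FL
variable {n : ℕ} {q : ℝ}

lemma int_bdd (hn : (n : ℝ) < q) {ε : ℝ} (hε : 0 < ε) {f : E n → ℝ} (hf : Measurable f) (M : ℝ)
    (hM : ∀ z, |f z| ≤ M) : Integrable (fun z => f z * ker q ε z) := by
  have hq : 0 < q := lt_of_le_of_lt (Nat.cast_nonneg n) hn
  refine FL.int_ker hq hε hf.aestronglyMeasurable ?_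
  refine ((int_wt hn).const_mul M).mono'
    (hf.aestronglyMeasurable.mul wt_cont.aestronglyMeasurable) ?_
  refine Eventually.of_forall fun z => ?_
  rw [norm_mul, Real.norm_of_nonneg (wt_pos z).le]
  exact mul_le_mul_of_nonneg_right (hM z) (wt_pos z).le

/-- The gain from the reflection coupling. -/
noncomputable def gain (φ : ℝ → ℝ) (r : ℝ) (e : E n) (z : E n) : ℝ :=
  if ‖z‖ < r / 4 then φ (r + 2 * inner ℝ e z) - φ r else 0

lemma gain_meas {φ : ℝ → ℝ} (hφ : Continuous φ) (r : ℝ) (e : E n) : Measurable (gain φ r e) := by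
  unfold gain
  refine Measurable.ite (measurableSet_lt measurable_norm measurable_const) ?_ measurable_const
  have : Continuous (fun z : E n => φ (r + 2 * inner ℝ e z) - φ r) :=
    (hφ.comp (by fun_prop)).sub continuous_const
  exact this.measurable

lemma inner_abs_le {e : E n} (he : ‖e‖ = 1) (z : E n) : |inner ℝ e z| ≤ ‖z‖ := by
  have := abs_real_inner_le_norm e z
  rwa [he, one_mul] at this

lemma gain_int (hn : (n : ℝ) < q) {φ : ℝ → ℝ} (hφ : Continuous φ) {r : ℝ} {e : E n}
    (he : ‖e‖ = 1) {ε : ℝ} (hε : 0 < ε) : Integrable (fun z => gain φ r e z * ker q ε z) := by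
  obtain ⟨M, hM⟩ := (isCompact_Icc (a := r - 2 * r / 4) (b := r + 2 * r / 4)).exists_bound_of_continuousOn
    (f := fun t => φ t - φ r) (hφ.sub continuous_const).continuousOn
  refine int_bdd hn hε (gain_meas hφ r e) (max M 0) fun z => ?_
  unfold gain
  split_ifs with h
  · have := abs_le.1 (inner_abs_le he z)
    exact (hM _ ⟨by linarith [this.1], by linarith [this.2]⟩).trans (le_max_left _ _)
  · simp

lemma gain_bound (hn1 : 1 ≤ n) {α : ℝ} (hα : 0 < α) (hq : q = n + α) {φ : ℝ → ℝ}
    (hφ : Continuous φ) {c : ℝ} (hc : 0 < c)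
    (hD0 : ∀ r τ : ℝ, 0 < r → r < 1 / 2 → |τ| ≤ 1 / 2 → φ (r + r * τ) + φ (r - r * τ) - 2 * φ r ≤ 0)
    (hD1 : ∀ r τ : ℝ, 0 < r → r < 1 / 2 → 1 / 8 ≤ τ → τ ≤ 3 / 8 →
      φ (r + r * τ) + φ (r - r * τ) - 2 * φ r ≤ - (c * r ^ α)) :
    ∃ c₁ : ℝ, 0 < c₁ ∧ ∀ (r : ℝ) (e : E n) (ε : ℝ), 0 < r → r < 1 / 2 → ‖e‖ = 1 → 0 < ε →
      ε < r / 16 → ∫ z, gain φ r e z * ker q ε z ≤ - c₁ := by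
  have : Nonempty (Fin n) := ⟨⟨0, hn1⟩⟩
  have hn : (n : ℝ) < q := by linarith
  have hq0 : 0 < q := lt_of_le_of_lt (Nat.cast_nonneg n) hn
  set V : ℝ := volume.real (ball (0 : E n) 1) with hV
  have hVpos : 0 < V := by
    rw [hV]
    exact ENNReal.toReal_pos (measure_ball_pos _ _ one_pos).ne' measure_ball_lt_top.ne
  refine ⟨c / 2 * 4 ^ q * (16 ^ n)⁻¹ * V, by positivity, ?_⟩
  intro r e ε hr hr2 he hε hεr
  have hgi := gain_int hn hφ (r := r) he hε (q := q)
  have h1 : ∫ z, gain φ r e (-z) * ker q ε z = ∫ z, gain φ r e z * ker q ε z := by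
    rw [← integral_neg_eq_self (fun z => gain φ r e z * ker q ε z)]
    congr 1; ext z; rw [ker_neg]
  have hgi' : Integrable (fun z => gain φ r e (-z) * ker q ε z) := by
    refine hgi.comp_neg.congr (Eventually.of_forall fun z => ?_)
    simp only [ker_neg]
  set b : E n := (r / 8) • e with hb
  set A : ℝ := - (c * r ^ α * (r / 4) ^ (-q)) with hA
  have h2 : ∫ z, (gain φ r e z * ker q ε z + gain φ r e (-z) * ker q ε z) ≤
      ∫ z, indicator (ball b (r / 16)) (fun _ => A) z := by
    refine integral_mono (hgi.add hgi') ?_ ?_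
    · exact (integrable_indicator_iff measurableSet_ball).2
        (integrableOn_const measure_ball_lt_top.ne)
    intro z
    show gain φ r e z * ker q ε z + gain φ r e (-z) * ker q ε z ≤ _
    rw [← add_mul]
    have hg : ‖z‖ < r / 4 → gain φ r e z + gain φ r e (-z) =
        φ (r + r * (2 * inner ℝ e z / r)) + φ (r - r * (2 * inner ℝ e z / r)) - 2 * φ r := by
      intro h
      unfold gain
      rw [norm_neg, if_pos h, if_pos h, inner_neg_right]
      have : r * (2 * inner ℝ e z / r) = 2 * inner ℝ e z := by field_simp
      rw [this, mul_neg, ← sub_eq_add_neg]; ring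
    have hiz := abs_le.1 (inner_abs_le he z)
    by_cases hz : z ∈ ball b (r / 16)
    · rw [indicator_of_mem hz]
      have hz' : ‖z - b‖ < r / 16 := by rwa [mem_ball, dist_eq_norm] at hz
      have hib : inner ℝ e z = r / 8 + inner ℝ e (z - b) := by
        rw [inner_sub_right, hb, inner_smul_right, real_inner_self_eq_norm_sq, he]; ring
      have hizb := abs_le.1 (inner_abs_le he (z - b))
      have hi1 : r / 16 < inner ℝ e z := by linarith [hizb.1]
      have hi2 : inner ℝ e z < 3 * r / 16 := by linarith [hizb.2]
      have hnb : ‖b‖ = r / 8 := by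
        rw [hb, norm_smul, he, Real.norm_of_nonneg (by positivity)]; ring
      have hnz : ‖z‖ < r / 4 := by
        have : ‖z‖ ≤ ‖z - b‖ + ‖b‖ := by
          have := norm_add_le (z - b) b; rwa [sub_add_cancel] at this
        linarith
      rw [hg hnz]
      have hd := hD1 r (2 * inner ℝ e z / r) hr hr2
        (by rw [le_div_iff₀ hr]; linarith) (by rw [div_le_iff₀ hr]; linarith)
      have hk : (r / 4) ^ (-q) ≤ ker q ε z := by
        unfold ker
        rw [if_pos (by linarith)]
        exact Real.rpow_le_rpow_of_nonpos (by linarith) hnz.le (by linarith)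
      have hcr : 0 ≤ c * r ^ α := by positivity
      have := mul_le_mul_of_nonneg_right hd (ker_nonneg (q := q) ε z)
      have := mul_le_mul_of_nonneg_left hk hcr
      rw [hA]; linarith
    · rw [indicator_of_notMem hz]
      by_cases h : ‖z‖ < r / 4
      · rw [hg h]
        refine mul_nonpos_of_nonpos_of_nonneg ?_ (ker_nonneg _ _)
        refine hD0 r _ hr hr2 ?_
        rw [abs_div, abs_of_pos hr, div_le_iff₀ hr, abs_mul]
        have := inner_abs_le he z
        norm_num
        linarith
      · unfold gain
        simp only [norm_neg, if_neg h]; simp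
  rw [integral_add hgi hgi', h1, integral_indicator measurableSet_ball, setIntegral_const] at h2
  have hvol : volume.real (ball b (r / 16)) = (r / 16) ^ n * V := by
    rw [hV, Measure.real, Measure.addHaar_ball _ _ (by positivity), ENNReal.toReal_mul,
      ENNReal.toReal_ofReal (by positivity)]
    simp [Measure.real]
  rw [hvol, smul_eq_mul, hA] at h2
  have e1 : (r / 4) ^ (-q) = r ^ (-q) * 4 ^ q := by
    rw [Real.div_rpow hr.le (by norm_num), Real.rpow_neg (by norm_num : (0:ℝ) ≤ 4)]
    field_simp
  have e2 : r ^ n * r ^ α * r ^ (-q) = 1 := by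
    rw [← Real.rpow_natCast, ← Real.rpow_add hr, ← Real.rpow_add hr, hq]; simp
  have e3 : (r / 16) ^ n * V * -(c * r ^ α * (r / 4) ^ (-q)) =
      - (c * 4 ^ q * (16 ^ n)⁻¹ * V) * (r ^ n * r ^ α * r ^ (-q)) := by
    rw [e1, div_pow]; ring
  rw [e3, e2] at h2
  linarith

set_option maxHeartbeats 1000000 in
/-- Modulus of continuity at the origin by the reflection coupling. -/
lemma modulus (hn1 : 1 ≤ n) {α : ℝ} (hα : 0 < α) (hα2 : α < 2) (hq : q = n + α) {φ : ℝ → ℝ}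
    (hφ : Continuous φ) {c : ℝ} (hc : 0 < c)
    (hD0 : ∀ r τ : ℝ, 0 < r → r < 1 / 2 → |τ| ≤ 1 / 2 → φ (r + r * τ) + φ (r - r * τ) - 2 * φ r ≤ 0)
    (hD1 : ∀ r τ : ℝ, 0 < r → r < 1 / 2 → 1 / 8 ≤ τ → τ ≤ 3 / 8 →
      φ (r + r * τ) + φ (r - r * τ) - 2 * φ r ≤ - (c * r ^ α))
    (h0 : φ 0 = 0) (hpos : ∀ r, 0 ≤ r → r ≤ 4 → 0 ≤ φ r) {c₀ : ℝ} (hc₀ : 0 < c₀)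
    (hbig : ∀ r, 1 / 2 ≤ r → r ≤ 4 → c₀ ≤ φ r) {C₂ : ℝ} (hC₂ : 0 < C₂) :
    ∃ K : ℝ, 0 < K ∧ ∀ u : E n → ℝ, SH q u → (∀ x, ‖x‖ ≤ 2 → |u x| ≤ C₂) →
      ∫ y, |u y| * wt q y ≤ 1 → ∀ y, ‖y‖ ≤ 2 → u 0 - u y ≤ K * φ ‖y‖ := by
  have hn : (n : ℝ) < q := by linarith
  have hn2 : q < n + 2 := by linarith
  have hq0 : 0 < q := lt_of_le_of_lt (Nat.cast_nonneg n) hn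
  obtain ⟨c₁, hc₁, hgain⟩ := gain_bound hn1 hα hq hφ hc hD0 hD1
  obtain ⟨C5, hC5, hpb⟩ := pb_bound hn1 hn hn2
  set K : ℝ := 2 * C₂ / c₀ + (2 * C₂ * C5 + 2 * 7 ^ q + 1) / c₁ with hK
  have hK0 : 0 < K := by positivity
  have hKc0 : 2 * C₂ ≤ K * c₀ := by
    rw [hK, add_mul, div_mul_cancel₀ _ hc₀.ne']
    have : 0 ≤ (2 * C₂ * C5 + 2 * 7 ^ q + 1) / c₁ * c₀ := by positivity
    linarith
  have hKc1 : 2 * C₂ * C5 + 2 * 7 ^ q + 1 ≤ K * c₁ := by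
    rw [hK, add_mul, div_mul_cancel₀ _ hc₁.ne']
    have : 0 ≤ 2 * C₂ / c₀ * c₁ := by positivity
    linarith
  clear_value K
  refine ⟨K, hK0, ?_⟩
  intro u hu hub hu1 y' hy'
  by_contra hcon
  push Not at hcon
  obtain ⟨⟨x₀, y₀⟩, hxy, hmax⟩ :=
    ((isCompact_closedBall (0 : E n) 2).prod (isCompact_closedBall (0 : E n) 2)).exists_isMaxOn
    ⟨(0, 0), by simp⟩
    (f := fun p : E n × E n => u p.1 - u p.2 - K * φ ‖p.1 - p.2‖ - 2 * C₂ * ‖p.1‖ ^ 2)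
    (by
      have h1 := hu.cont
      have : Continuous fun p : E n × E n => φ ‖p.1 - p.2‖ := hφ.comp (by fun_prop)
      exact Continuous.continuousOn (by fun_prop))
  obtain ⟨hx0, hy0⟩ : ‖x₀‖ ≤ 2 ∧ ‖y₀‖ ≤ 2 := by simpa using hxy
  have hmax' : ∀ x y : E n, ‖x‖ ≤ 2 → ‖y‖ ≤ 2 →
      u x - u y - K * φ ‖x - y‖ - 2 * C₂ * ‖x‖ ^ 2 ≤
      u x₀ - u y₀ - K * φ ‖x₀ - y₀‖ - 2 * C₂ * ‖x₀‖ ^ 2 := fun x y hx hy =>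
    hmax (show (x, y) ∈ closedBall (0 : E n) 2 ×ˢ closedBall (0 : E n) 2 by simp [hx, hy])
  clear hmax hxy
  have hGpos : 0 < u x₀ - u y₀ - K * φ ‖x₀ - y₀‖ - 2 * C₂ * ‖x₀‖ ^ 2 := by
    have := hmax' 0 y' (by simp) hy'
    simp only [zero_sub, norm_neg, norm_zero] at this
    linarith
  have hux := abs_le.1 (hub x₀ hx0)
  have huy := abs_le.1 (hub y₀ hy0)
  set r : ℝ := ‖x₀ - y₀‖ with hr
  have hr4 : r ≤ 4 := (norm_sub_le _ _).trans (by linarith)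
  have hφr := mul_nonneg hK0.le (hpos r (norm_nonneg _) hr4)
  have hx1 : ‖x₀‖ < 1 := by
    by_contra h
    push Not at h
    have : 1 ≤ ‖x₀‖ ^ 2 := one_le_pow₀ h
    nlinarith [hux.2, huy.1]
  have hx2 : 0 ≤ C₂ * ‖x₀‖ ^ 2 := by positivity
  have hr2 : r < 1 / 2 := by
    by_contra h
    push Not at h
    have := mul_le_mul_of_nonneg_left (hbig r h hr4) hK0.le
    linarith [hux.2, huy.1]
  have hrpos : 0 < r := by
    rcases (norm_nonneg (x₀ - y₀)).lt_or_eq with h | h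
    · exact h
    · have h' : x₀ = y₀ := by rw [← sub_eq_zero, ← norm_eq_zero]; exact h.symm
      rw [h'] at hGpos hx2
      linarith
  have hy1 : ‖y₀‖ < 3 / 2 := by
    have := norm_sub_norm_le y₀ x₀
    rw [norm_sub_rev, ← hr] at this
    linarith
  set e : E n := r⁻¹ • (x₀ - y₀) with he'
  have he : ‖e‖ = 1 := by
    rw [he', norm_smul, ← hr, Real.norm_of_nonneg (by positivity), inv_mul_cancel₀ hrpos.ne']
  have hre : x₀ - y₀ = r • e := by
    rw [he', smul_smul, mul_inv_cancel₀ hrpos.ne', one_smul]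
  set σ : E n ≃ₗᵢ[ℝ] E n := (Submodule.span ℝ {e})ᗮ.reflection with hσ
  have hσz : ∀ z, σ z = z - (2 * inner ℝ e z) • e := by
    intro z
    rw [hσ, Submodule.reflection_orthogonal_apply, Submodule.reflection_singleton_apply]
    simp only [he, RCLike.ofReal_real_eq_id, id, one_pow, div_one]
    rw [two_smul, mul_smul, two_smul]; abel
  have hσm : MeasurePreserving σ volume volume := σ.measurePreserving
  have hσk : ∀ ε z, ker q ε (σ z) = ker q ε z := by
    intro ε z; unfold ker; rw [σ.norm_map]
  -- main inequality
  have main : ∀ ε : ℝ, 0 < ε → ε < r / 16 →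
      -(∫ z, (u x₀ - u (x₀ + z)) * ker q ε z) + (∫ z, (u y₀ - u (y₀ + z)) * ker q ε z) ≤ -1 := by
    intro ε hε hεr
    set g : E n → ℝ := fun z => (u y₀ - u (y₀ + z)) * ker q ε z with hg
    have hgi : Integrable g := hu.int_ker hn hε y₀ (u y₀)
    set B : Set (E n) := {z | ‖z‖ < r / 4} with hB
    have hBm : MeasurableSet B := measurableSet_lt measurable_norm measurable_const
    have hi1 : Integrable (B.indicator g) := hgi.indicator hBm
    have hi2 : Integrable (Bᶜ.indicator g) := hgi.indicator hBm.compl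
    have hi1' : Integrable (fun z => B.indicator g (σ z)) :=
      (hσm.integrable_comp_emb σ.toHomeomorph.measurableEmbedding).2 hi1
    have hge : ∫ z, g z = ∫ z, (B.indicator g (σ z) + Bᶜ.indicator g z) := by
      rw [integral_add hi1' hi2,
        hσm.integral_comp σ.toHomeomorph.measurableEmbedding (B.indicator g),
        ← integral_add hi1 hi2]
      congr 1; ext z
      exact (congrFun (indicator_self_add_compl B g) z).symm
    have hA : Integrable (fun z => (u x₀ - u (x₀ + z)) * ker q ε z) := hu.int_ker hn hε x₀ (u x₀)
    have hua := int_abs hu.int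
    have hR1 : Integrable (fun z => K * (gain φ r e z * ker q ε z)) :=
      (gain_int hn hφ he hε).const_mul K
    have hR2 : Integrable (fun z => 2 * C₂ * (pb ((2:ℝ) • x₀) z * ker q ε z)) :=
      (pb_int hn _ hε).const_mul _
    have hR3 : Integrable (fun z => 7 ^ q * (|u (x₀ + z)| * wt q (x₀ + z))) :=
      (hua.comp_add_left x₀).const_mul _
    have hR4 : Integrable (fun z => 7 ^ q * (|u (y₀ + z)| * wt q (y₀ + z))) :=
      (hua.comp_add_left y₀).const_mul _
    have hpt : ∀ z : E n, -((u x₀ - u (x₀ + z)) * ker q ε z) +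
        (B.indicator g (σ z) + Bᶜ.indicator g z) ≤
        (K * (gain φ r e z * ker q ε z) + 2 * C₂ * (pb ((2:ℝ) • x₀) z * ker q ε z)) +
        (7 ^ q * (|u (x₀ + z)| * wt q (x₀ + z)) + 7 ^ q * (|u (y₀ + z)| * wt q (y₀ + z))) := by
      intro z
      have hk0 := ker_nonneg (q := q) ε z
      have hw1 := wt_pos (q := q) (x₀ + z)
      have hw2 := wt_pos (q := q) (y₀ + z)
      have t1 : 0 ≤ 7 ^ q * (|u (x₀ + z)| * wt q (x₀ + z)) := by positivity
      have t2 : 0 ≤ 7 ^ q * (|u (y₀ + z)| * wt q (y₀ + z)) := by positivity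
      have hsq : ‖x₀ + z‖ ^ 2 = ‖x₀‖ ^ 2 + 2 * inner ℝ x₀ z + ‖z‖ ^ 2 := norm_add_sq_real _ _
      have hin : inner ℝ ((2:ℝ) • x₀) z = 2 * inner ℝ x₀ z := by
        rw [inner_smul_left]; simp
      have hxz := norm_add_le x₀ z
      by_cases hzB : ‖z‖ < r / 4
      · have m1 : σ z ∈ B := by rw [hB, mem_setOf_eq, σ.norm_map]; exact hzB
        have m2 : z ∉ Bᶜ := by simpa [hB] using hzB
        rw [indicator_of_mem m1, indicator_of_notMem m2]
        have hyz := norm_add_le y₀ (σ z)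
        rw [σ.norm_map] at hyz
        have hm := hmax' (x₀ + z) (y₀ + σ z) (by linarith) (by linarith)
        have hdiff : ‖x₀ + z - (y₀ + σ z)‖ = r + 2 * inner ℝ e z := by
          have : x₀ + z - (y₀ + σ z) = (r + 2 * inner ℝ e z) • e := by
            rw [add_smul, ← hre, hσz]; abel
          have hi := abs_le.1 (inner_abs_le he z)
          rw [this, norm_smul, he, mul_one, Real.norm_of_nonneg (by linarith [hi.1])]
        rw [hdiff, hsq] at hm
        have hfin : -(u x₀ - u (x₀ + z)) + (u y₀ - u (y₀ + σ z)) ≤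
            K * gain φ r e z + 2 * C₂ * pb ((2:ℝ) • x₀) z := by
          unfold gain pb
          rw [if_pos hzB, if_pos (by linarith), hin]
          linarith
        have := mul_le_mul_of_nonneg_right hfin hk0
        simp only [hg, hσk]
        linarith
      · have m1 : σ z ∉ B := by rw [hB, mem_setOf_eq, σ.norm_map]; exact hzB
        have m2 : z ∈ Bᶜ := by simpa [hB] using hzB
        rw [indicator_of_notMem m1, indicator_of_mem m2]
        have hg0 : gain φ r e z = 0 := by unfold gain; rw [if_neg hzB]
        rw [hg0]
        have hyz := norm_add_le y₀ z
        by_cases hz2 : ‖z‖ < 1 / 2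
        · have hm := hmax' (x₀ + z) (y₀ + z) (by linarith) (by linarith)
          rw [add_sub_add_right_eq_sub, ← hr, hsq] at hm
          have hfin : -(u x₀ - u (x₀ + z)) + (u y₀ - u (y₀ + z)) ≤
              2 * C₂ * pb ((2:ℝ) • x₀) z := by
            unfold pb
            rw [if_pos hz2, hin]
            linarith
          have := mul_le_mul_of_nonneg_right hfin hk0
          simp only [hg]
          linarith
        · have hpb1 : pb ((2:ℝ) • x₀) z = 1 := by unfold pb; rw [if_neg hz2]
          rw [hpb1]
          push Not at hz2
          have k1 : ker q ε z ≤ 7 ^ q * wt q (x₀ + z) := by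
            unfold ker
            split_ifs
            · exact rp hq0 (by positivity) (by norm_num) (by linarith) (by linarith)
            · positivity
          have k2 : ker q ε z ≤ 7 ^ q * wt q (y₀ + z) := by
            unfold ker
            split_ifs
            · exact rp hq0 (by positivity) (by norm_num) (by linarith) (by linarith)
            · positivity
          have j1 := mul_le_mul_of_nonneg_left k1 (abs_nonneg (u (x₀ + z)))
          have j2 := mul_le_mul_of_nonneg_left k2 (abs_nonneg (u (y₀ + z)))
          have j3 := mul_le_mul_of_nonneg_right (le_abs_self (u (x₀ + z))) hk0
          have j4 := mul_le_mul_of_nonneg_right (neg_abs_le (u (y₀ + z))) hk0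
          have j5 := mul_le_mul_of_nonneg_right
            (show u y₀ - u x₀ ≤ 2 * C₂ by linarith [hux.1, huy.2]) hk0
          simp only [hg]
          linarith
    have hLi := hA.neg.add (hi1'.add hi2)
    have hmono := integral_mono hLi ((hR1.add hR2).add (hR3.add hR4)) hpt
    have eL : ∫ z, (-((u x₀ - u (x₀ + z)) * ker q ε z) +
        (B.indicator g (σ z) + Bᶜ.indicator g z)) =
        -(∫ z, (u x₀ - u (x₀ + z)) * ker q ε z) + ∫ z, g z := by
      rw [hge, ← integral_neg]
      exact integral_add hA.neg (hi1'.add hi2)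
    have eR : ∫ z, ((K * (gain φ r e z * ker q ε z) + 2 * C₂ * (pb ((2:ℝ) • x₀) z * ker q ε z)) +
        (7 ^ q * (|u (x₀ + z)| * wt q (x₀ + z)) + 7 ^ q * (|u (y₀ + z)| * wt q (y₀ + z)))) =
        (K * (∫ z, gain φ r e z * ker q ε z) + 2 * C₂ * ∫ z, pb ((2:ℝ) • x₀) z * ker q ε z) +
        (7 ^ q * (∫ z, |u z| * wt q z) + 7 ^ q * (∫ z, |u z| * wt q z)) := by
      rw [← integral_const_mul, ← integral_const_mul, ← integral_add hR1 hR2]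
      have e1 : 7 ^ q * (∫ z, |u z| * wt q z) = ∫ z, 7 ^ q * (|u (x₀ + z)| * wt q (x₀ + z)) := by
        rw [integral_const_mul, integral_add_left_eq_self (fun z => |u z| * wt q z)]
      have e2 : 7 ^ q * (∫ z, |u z| * wt q z) = ∫ z, 7 ^ q * (|u (y₀ + z)| * wt q (y₀ + z)) := by
        rw [integral_const_mul, integral_add_left_eq_self (fun z => |u z| * wt q z)]
      nth_rewrite 1 [e1]
      rw [e2, ← integral_add hR3 hR4]
      exact integral_add (hR1.add hR2) (hR3.add hR4)
    have hmono' := eL.symm.trans_le (hmono.trans_eq eR)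
    have f1 := mul_le_mul_of_nonneg_left (hgain r e ε hrpos hr2 he hε hεr) hK0.le
    have f2 := mul_le_mul_of_nonneg_left (hpb ((2:ℝ) • x₀) ε hε) (by positivity : 0 ≤ 2 * C₂)
    have f3 := mul_le_mul_of_nonneg_left hu1 (by positivity : (0:ℝ) ≤ 7 ^ q)
    linarith
  have hlim := ((hu.pv x₀).neg).add (hu.pv y₀)
  have : (-0 + 0 : ℝ) ≤ -1 := by
    refine le_of_tendsto hlim ?_
    have h2 : ∀ᶠ ε in 𝓝[>] (0:ℝ), ε < r / 16 :=
      mem_nhdsWithin_of_mem_nhds (Iio_mem_nhds (by positivity))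
    filter_upwards [self_mem_nhdsWithin, h2] with ε h1 h2
    exact main ε h1 h2
  norm_num at this

end FL

namespace FL
variable {n : ℕ} {q : ℝ}

lemma exists_gap {g : ℝ → ℝ} (hg : Continuous g) (hneg : ∀ τ, 1/8 ≤ τ → τ ≤ 3/8 → g τ < 0) :
    ∃ c : ℝ, 0 < c ∧ ∀ τ, 1/8 ≤ τ → τ ≤ 3/8 → g τ ≤ -c := by
  obtain ⟨t, ht, hmax⟩ := (isCompact_Icc (a := (1/8:ℝ)) (b := 3/8)).exists_isMaxOn
    ⟨1/8, by norm_num, by norm_num⟩ hg.continuousOn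
  refine ⟨-g t, by linarith [hneg t ht.1 ht.2], fun τ h1 h2 => ?_⟩
  have : g τ ≤ g t := hmax ⟨h1, h2⟩
  linarith

lemma convex_diff {a : ℝ} (ha : 1 < a) {τ : ℝ} (h : |τ| ≤ 1/2) :
    0 ≤ (1 + τ) ^ a + (1 - τ) ^ a - 2 ∧ (τ ≠ 0 → 0 < (1 + τ) ^ a + (1 - τ) ^ a - 2) := by
  have hb := abs_le.1 h
  have key : τ ≠ 0 → 0 < (1 + τ) ^ a + (1 - τ) ^ a - 2 := by
    intro h0
    have := (strictConvexOn_rpow ha).2 (show 1 + τ ∈ Ici (0:ℝ) from by simp; linarith)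
      (show 1 - τ ∈ Ici (0:ℝ) from by simp; linarith) (by intro h; apply h0; linarith)
      (show (0:ℝ) < 1/2 by norm_num) (show (0:ℝ) < 1/2 by norm_num) (by norm_num)
    have e : (1/2:ℝ) • (1 + τ) + (1/2:ℝ) • (1 - τ) = 1 := by simp only [smul_eq_mul]; ring
    simp only [e, Real.one_rpow] at this
    simp only [smul_eq_mul] at this
    linarith
  refine ⟨?_, key⟩
  by_cases h0 : τ = 0
  · simp [h0]; norm_num
  · exact (key h0).le

lemma concave_diff {a : ℝ} (ha0 : 0 < a) (ha : a < 1) {τ : ℝ} (h : |τ| ≤ 1/2) :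
    (1 + τ) ^ a + (1 - τ) ^ a - 2 ≤ 0 ∧ (τ ≠ 0 → (1 + τ) ^ a + (1 - τ) ^ a - 2 < 0) := by
  have hb := abs_le.1 h
  have key : τ ≠ 0 → (1 + τ) ^ a + (1 - τ) ^ a - 2 < 0 := by
    intro h0
    have := (Real.strictConcaveOn_rpow ha0 ha).2 (show 1 + τ ∈ Ici (0:ℝ) from by simp; linarith)
      (show 1 - τ ∈ Ici (0:ℝ) from by simp; linarith) (by intro h; apply h0; linarith)
      (show (0:ℝ) < 1/2 by norm_num) (show (0:ℝ) < 1/2 by norm_num) (by norm_num)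
    have e : (1/2:ℝ) • (1 + τ) + (1/2:ℝ) • (1 - τ) = 1 := by simp only [smul_eq_mul]; ring
    simp only [e, Real.one_rpow] at this
    simp only [smul_eq_mul] at this
    linarith
  refine ⟨?_, key⟩
  by_cases h0 : τ = 0
  · simp [h0]; norm_num
  · exact (key h0).le

lemma diff_scale (a : ℝ) {r τ : ℝ} (hr : 0 < r) (h : |τ| ≤ 1/2) :
    (r + r * τ) ^ a + (r - r * τ) ^ a - 2 * r ^ a = r ^ a * ((1 + τ) ^ a + (1 - τ) ^ a - 2) := by
  have hb := abs_le.1 h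
  have e1 : r + r * τ = r * (1 + τ) := by ring
  have e2 : r - r * τ = r * (1 - τ) := by ring
  rw [e1, e2, Real.mul_rpow hr.le (by linarith), Real.mul_rpow hr.le (by linarith)]
  ring

/-- Hölder type estimate at the origin. -/
lemma holder (hn1 : 1 ≤ n) {α γ : ℝ} (hα : 0 < α) (hα2 : α < 2) (hq : q = n + α)
    (hγ0 : 0 ≤ γ) (hγ1 : γ ≤ 1) (hγα : γ < α) :
    ∃ p : ℝ, γ ≤ p ∧ 0 < p ∧ p < α ∧ ∃ H : ℝ, 0 < H ∧ ∀ u : E n → ℝ, SH q u →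
      ∫ y, |u y| * wt q y ≤ 1 → ∀ y, ‖y‖ ≤ 2 → u 0 - u y ≤ H * ‖y‖ ^ p := by
  have hn : (n : ℝ) < q := by linarith
  have hn2 : q < n + 2 := by linarith
  obtain ⟨C, hC, hsup⟩ := sup_bound (n := n) hn1 hn hn2
  have hbd : ∀ u : E n → ℝ, SH q u → ∫ y, |u y| * wt q y ≤ 1 → ∀ x, ‖x‖ ≤ 2 → |u x| ≤ C := by
    intro u hu h1 x hx
    refine abs_le.2 ⟨?_, hsup u hu h1 x hx⟩
    have := hsup _ hu.neg (by simpa using h1) x hx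
    linarith
  rcases lt_or_ge 1 α with h | h
  · refine ⟨1, hγ1, one_pos, h, ?_⟩
    obtain ⟨c, hc, hgap⟩ := exists_gap (g := fun τ => -((1 + τ) ^ α + (1 - τ) ^ α - 2))
      (by
        have h1 : Continuous fun τ : ℝ => (1 + τ) ^ α :=
          (Real.continuous_rpow_const hα.le).comp (by fun_prop)
        have h2 : Continuous fun τ : ℝ => (1 - τ) ^ α :=
          (Real.continuous_rpow_const hα.le).comp (by fun_prop)
        fun_prop)
      (by
        intro τ h1 h2
        have := (convex_diff h (τ := τ) (abs_le.2 ⟨by linarith, by linarith⟩)).2 (by linarith)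
        linarith)
    have hle : ∀ r : ℝ, 0 ≤ r → r ≤ 4 → r ^ α ≤ 4 * r := by
      intro r h0 h4
      rcases h0.eq_or_lt with h0 | h0
      · rw [← h0, Real.zero_rpow hα.ne']; simp
      have e : r ^ α = r ^ (α - 1) * r := by
        rw [← Real.rpow_add_one h0.ne']; simp
      rw [e]
      refine mul_le_mul_of_nonneg_right ?_ h0.le
      calc r ^ (α - 1) ≤ 4 ^ (α - 1) := Real.rpow_le_rpow h0.le h4 (by linarith)
        _ ≤ 4 ^ (1:ℝ) := Real.rpow_le_rpow_of_exponent_le (by norm_num) (by linarith)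
        _ = 4 := by simp
    obtain ⟨K, hK, hmod⟩ := modulus (n := n) (q := q) hn1 hα hα2 hq
      (φ := fun r => 5 * r - r ^ α) (c := c) (c₀ := 1/2) (C₂ := C)
      (by have := Real.continuous_rpow_const hα.le; fun_prop) hc
      (by
        intro r τ hr hr2 hτ
        have h1 := diff_scale α hr hτ
        have h2 := mul_nonneg (Real.rpow_nonneg hr.le α) (convex_diff h hτ).1
        linarith)
      (by
        intro r τ hr hr2 h18 h38
        have h1 := diff_scale α hr (τ := τ) (abs_le.2 ⟨by linarith, by linarith⟩)
        have h2 := mul_le_mul_of_nonneg_left (hgap τ h18 h38) (Real.rpow_nonneg hr.le α)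
        linarith)
      (by simp [Real.zero_rpow hα.ne'])
      (by intro r h0 h4; have := hle r h0 h4; linarith)
      (by norm_num)
      (by intro r h0 h4; have := hle r (by linarith) h4; linarith)
      hC
    refine ⟨K * 5, by positivity, fun u hu h1 y hy => ?_⟩
    refine (hmod u hu (hbd u hu h1) h1 y hy).trans ?_
    rw [Real.rpow_one, mul_assoc]
    refine mul_le_mul_of_nonneg_left ?_ hK.le
    have := Real.rpow_nonneg (norm_nonneg y) α
    linarith
  · set p := (γ + α) / 2 with hp
    have hp0 : 0 < p := by linarith
    have hp1 : p < 1 := by linarith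
    have hpα : p < α := by linarith
    refine ⟨p, by linarith, hp0, hpα, ?_⟩
    obtain ⟨c, hc, hgap⟩ := exists_gap (g := fun τ => ((1 + τ) ^ p + (1 - τ) ^ p - 2))
      (by
        have h1 : Continuous fun τ : ℝ => (1 + τ) ^ p :=
          (Real.continuous_rpow_const hp0.le).comp (by fun_prop)
        have h2 : Continuous fun τ : ℝ => (1 - τ) ^ p :=
          (Real.continuous_rpow_const hp0.le).comp (by fun_prop)
        fun_prop)
      (by
        intro τ h1 h2
        exact (concave_diff hp0 hp1 (τ := τ) (abs_le.2 ⟨by linarith, by linarith⟩)).2 (by linarith))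
    obtain ⟨K, hK, hmod⟩ := modulus (n := n) (q := q) hn1 hα hα2 hq
      (φ := fun r => r ^ p) (c := c) (c₀ := (1/2) ^ p) (C₂ := C)
      (Real.continuous_rpow_const hp0.le) hc
      (by
        intro r τ hr hr2 hτ
        have h1 := diff_scale p hr hτ
        have h2 := mul_nonneg (Real.rpow_nonneg hr.le p) (neg_nonneg.2 (concave_diff hp0 hp1 hτ).1)
        linarith)
      (by
        intro r τ hr hr2 h18 h38
        have h1 := diff_scale p hr (τ := τ) (abs_le.2 ⟨by linarith, by linarith⟩)
        have h2 := mul_le_mul_of_nonneg_left (hgap τ h18 h38) (Real.rpow_nonneg hr.le p)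
        have h3 : r ^ α ≤ r ^ p := Real.rpow_le_rpow_of_exponent_ge hr (by linarith) hpα.le
        have h4 := mul_le_mul_of_nonneg_left h3 hc.le
        linarith)
      (by simp [Real.zero_rpow hp0.ne'])
      (by intro r h0 h4; exact Real.rpow_nonneg h0 _)
      (by positivity)
      (by intro r h0 h4; exact Real.rpow_le_rpow (by norm_num) h0 hp0.le)
      hC
    exact ⟨K, hK, fun u hu h1 y hy => hmod u hu (hbd u hu h1) h1 y hy⟩

lemma holder_scaled {p H : ℝ} (hH : ∀ u : E n → ℝ, SH q u →
      ∫ y, |u y| * wt q y ≤ 1 → ∀ y, ‖y‖ ≤ 2 → u 0 - u y ≤ H * ‖y‖ ^ p)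
    {u : E n → ℝ} (hu : SH q u) {T : ℝ} (hT : 0 < T) (hi : ∫ y, |u y| * wt q y ≤ T)
    {y : E n} (hy : ‖y‖ ≤ 2) : |u 0 - u y| ≤ H * T * ‖y‖ ^ p := by
  have hone : ∫ y, |T⁻¹ * u y| * wt q y ≤ 1 := by
    have e : (fun y => |T⁻¹ * u y| * wt q y) = fun y => T⁻¹ * (|u y| * wt q y) := by
      ext y; rw [abs_mul, abs_of_pos (by positivity : 0 < T⁻¹)]; ring
    rw [e, integral_const_mul, inv_mul_le_iff₀ hT]; linarith
  have h1 := hH _ (hu.const_mul T⁻¹) hone y hy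
  have h2 := hH _ (hu.const_mul T⁻¹).neg (by simpa using hone) y hy
  have h1' := mul_le_mul_of_nonneg_left h1 hT.le
  have h2' := mul_le_mul_of_nonneg_left h2 hT.le
  have e : ∀ x, T * (T⁻¹ * u x) = u x := fun x => by field_simp
  rw [mul_sub, e, e] at h1'
  have h2'' : T * (-(T⁻¹ * u 0) - -(T⁻¹ * u y)) = - (u 0 - u y) := by field_simp; ring
  rw [h2''] at h2'
  rw [abs_le]; constructor <;> linarith

lemma int_pow {p : ℝ} (hp : 0 ≤ p) (hpq : (n : ℝ) < q - p) :
    Integrable (fun y : E n => ‖y‖ ^ p * wt q y) := by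
  refine (int_wt hpq).mono' ?_ (Eventually.of_forall fun y => ?_)
  · exact ((continuous_norm.rpow_const fun _ => Or.inr hp).mul wt_cont).aestronglyMeasurable
  · rw [Real.norm_of_nonneg (mul_nonneg (by positivity) (wt_pos y).le)]
    unfold wt
    have h : 0 < 1 + ‖y‖ := by positivity
    have e : (1 + ‖y‖) ^ (-(q - p)) = (1 + ‖y‖) ^ p * (1 + ‖y‖) ^ (-q) := by
      rw [← Real.rpow_add h]; congr 1; ring
    rw [e]
    refine mul_le_mul_of_nonneg_right ?_ (by positivity)
    exact Real.rpow_le_rpow (norm_nonneg _) (by linarith) hp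

lemma build (hn1 : 1 ≤ n) (hq : 0 < q) {u : E n → ℝ}
    (hL : Integrable (fun y : E n => |u y| / (1 + ‖y‖ ^ q))) (hcont : Continuous u)
    (hharm : ∀ x : E n, Tendsto (fun ε : ℝ => ∫ y in {y : E n | ε < ‖y - x‖},
          (u x - u y) / ‖x - y‖ ^ q) (𝓝[>] (0:ℝ)) (𝓝 0)) : SH q u := by
  refine ⟨hcont, ?_, ?_⟩
  · refine (hL.const_mul 2).mono' (hcont.mul wt_cont).aestronglyMeasurable
      (Eventually.of_forall fun y => ?_)
    rw [norm_mul, Real.norm_of_nonneg (wt_pos y).le, Real.norm_eq_abs]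
    have h1 : 1 ≤ (1 + ‖y‖) ^ q := Real.one_le_rpow (by linarith [norm_nonneg y]) hq.le
    have h2 : ‖y‖ ^ q ≤ (1 + ‖y‖) ^ q :=
      Real.rpow_le_rpow (norm_nonneg _) (by linarith) hq.le
    have h3 : 0 ≤ ‖y‖ ^ q := by positivity
    unfold wt
    rw [Real.rpow_neg (by positivity), ← div_eq_mul_inv, ← mul_div_assoc,
      div_le_div_iff₀ (by linarith) (by linarith)]
    nlinarith [abs_nonneg (u y)]
  · intro x
    refine (hharm x).congr fun ε => ?_
    have hm : MeasurableSet {y : E n | ε < ‖y - x‖} :=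
      measurableSet_lt measurable_const (by fun_prop)
    rw [← integral_indicator hm, ← integral_add_left_eq_self _ x]
    refine integral_congr_ae (Eventually.of_forall fun z => ?_)
    simp only [indicator, ker, mem_ofPred_eq, add_sub_cancel_left]
    split_ifs
    · rw [Real.rpow_neg (norm_nonneg _), ← div_eq_mul_inv]
      congr 2
      rw [norm_sub_rev, add_sub_cancel_left]
    · simp

lemma lower {p γ : ℝ} (hγ0 : 0 ≤ γ) (hγp : γ ≤ p) {u : E n → ℝ} (hcont : Continuous u)
    (hgrow : ∀ ε : ℝ, 0 < ε → ∀ᶠ x in cocompact (E n), -ε ≤ u x / ‖x‖ ^ γ)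
    {ε : ℝ} (hε : 0 < ε) : ∃ B : ℝ, 0 ≤ B ∧ ∀ x, -(ε * ‖x‖ ^ p) - B ≤ u x := by
  have h1 := hgrow ε hε
  rw [Filter.eventually_iff, mem_cocompact] at h1
  obtain ⟨t, ht, hts⟩ := h1
  obtain ⟨B, hB⟩ := (ht.union (isCompact_closedBall (0 : E n) 1)).exists_bound_of_continuousOn
    hcont.continuousOn
  refine ⟨|B|, abs_nonneg _, fun x => ?_⟩
  have hp0 : 0 ≤ ε * ‖x‖ ^ p := by positivity
  by_cases hx : x ∈ t ∪ closedBall (0 : E n) 1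
  · have := hB x hx
    rw [Real.norm_eq_abs] at this
    have := (abs_le.1 this).1
    linarith [le_abs_self B]
  · have hxt : x ∈ tᶜ := fun h => hx (Or.inl h)
    have hx1 : 1 < ‖x‖ := by
      by_contra h
      exact hx (Or.inr (by simpa using h))
    have h2 : -ε ≤ u x / ‖x‖ ^ γ := hts hxt
    rw [le_div_iff₀ (by positivity)] at h2
    have h3 : ‖x‖ ^ γ ≤ ‖x‖ ^ p := Real.rpow_le_rpow_of_exponent_le hx1.le hγp
    have := mul_le_mul_of_nonneg_left h3 hε.le
    linarith [abs_nonneg B]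

lemma avg_bound (hn1 : 1 ≤ n) (hn : (n : ℝ) < q) (hn2 : q < n + 2) {p : ℝ} (hp : 0 < p)
    (hpq : (n : ℝ) < q - p) : ∃ C : ℝ, 0 < C ∧ ∀ v : E n → ℝ, SH q v → ∀ δ B : ℝ, 0 ≤ δ → 0 ≤ B →
      (∀ y, -(δ * ‖y‖ ^ p) - B ≤ v y) → ∫ y, |v y| * wt q y ≤ C * (|v 0| + δ + B) := by
  obtain ⟨C, hC, hwh⟩ := weak_harnack (n := n) hn1 hn hn2
  set I : ℝ := ∫ y : E n, wt q y with hI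
  set J : ℝ := ∫ y : E n, ‖y‖ ^ p * wt q y with hJ
  have hI0 : 0 ≤ I := integral_nonneg fun y => (wt_pos y).le
  have hJ0 : 0 ≤ J := integral_nonneg fun y => mul_nonneg (by positivity) (wt_pos y).le
  refine ⟨C * (1 + J) + J + I + C, by positivity, ?_⟩
  intro v hv δ B hδ hB hlow
  have hw := hv.add_const hn (δ + B)
  have h1 := hwh _ hw (by
    intro y hy
    have : ‖y‖ ^ p ≤ 1 := Real.rpow_le_one (norm_nonneg _) hy hp.le
    have := mul_le_mul_of_nonneg_left this hδ
    have := hlow y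
    linarith)
  have hip := int_pos hw.cont hw.int
  have him := int_pos hw.neg.cont hw.neg.int
  have hJi := int_pow (n := n) hp.le hpq
  have h2 : ∫ y, max (-(v y + (δ + B))) 0 * wt q y ≤ δ * J := by
    rw [hJ, ← integral_const_mul]
    refine integral_mono him (hJi.const_mul δ) fun y => ?_
    simp only
    rw [← mul_assoc]
    refine mul_le_mul_of_nonneg_right (max_le ?_ (by positivity)) (wt_pos y).le
    have := hlow y
    linarith
  have h3 : ∫ y, |v y| * wt q y ≤ (∫ y, max (v y + (δ + B)) 0 * wt q y) +
      (∫ y, max (-(v y + (δ + B))) 0 * wt q y) + (δ + B) * I := by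
    rw [hI, ← integral_const_mul, ← integral_add hip him, ← integral_add (by exact hip.add him)
      ((int_wt hn).const_mul _)]
    refine integral_mono (int_abs hv.int) ((hip.add him).add ((int_wt hn).const_mul _)) fun y => ?_
    simp only [Pi.add_apply]
    rw [← add_mul, ← add_mul]
    refine mul_le_mul_of_nonneg_right (abs_le.2 ⟨?_, ?_⟩) (wt_pos y).le
    · have := le_max_left (-(v y + (δ + B))) 0
      have := le_max_right (v y + (δ + B)) 0
      linarith
    · have := le_max_right (-(v y + (δ + B))) 0
      have := le_max_left (v y + (δ + B)) 0
      linarith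
  have h4 : C * (v 0 + (δ + B) + ∫ y, max (-(v y + (δ + B))) 0 * wt q y) ≤
      C * (|v 0| + (δ + B) + δ * J) := by
    refine mul_le_mul_of_nonneg_left ?_ hC.le
    linarith [le_abs_self (v 0)]
  have a0 := abs_nonneg (v 0)
  have e1 : 0 ≤ C * J * |v 0| := by positivity
  have e2 : 0 ≤ J * |v 0| := by positivity
  have e3 : 0 ≤ I * |v 0| := by positivity
  have e4 : 0 ≤ C * |v 0| := by positivity
  have e5 : 0 ≤ C * J * B := by positivity
  have e6 : 0 ≤ J * B := by positivity
  have e8 : 0 ≤ C * δ := by positivity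
  have e9 : 0 ≤ C * B := by positivity
  nlinarith

theorem main (hn1 : 1 ≤ n) {α γ : ℝ} (hα : 0 < α) (hα2 : α < 2)
    (hγ0 : 0 ≤ γ) (hγ1 : γ ≤ 1) (hγα : γ < α) {u : E n → ℝ} (hu : SH ((n : ℝ) + α) u)
    (hgrow : ∀ ε : ℝ, 0 < ε → ∀ᶠ x in cocompact (E n), -ε ≤ u x / ‖x‖ ^ γ) (x : E n) :
    u x = u 0 := by
  obtain ⟨p, hγp, hp0, hpα, H, hH0, hH⟩ := holder (n := n) hn1 hα hα2 rfl hγ0 hγ1 hγα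
  obtain ⟨C, hC, havg⟩ := avg_bound (n := n) (q := n + α) hn1 (by linarith) (by linarith) hp0
    (by linarith)
  have hq : 0 < (n : ℝ) + α := by positivity
  have main1 : ∀ ε : ℝ, 0 < ε → |u 0 - u x| ≤ (H * C * ‖x‖ ^ p) * (2 * ε) := by
    intro ε hε
    obtain ⟨B, hB, hlow⟩ := lower hγ0 hγp hu.cont hgrow hε
    have ht : Tendsto (fun R : ℝ => R ^ p) atTop atTop := tendsto_rpow_atTop hp0
    obtain ⟨R, hR1, hRx, hRB⟩ := ((eventually_ge_atTop (1:ℝ)).and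
      ((eventually_ge_atTop ‖x‖).and (ht.eventually_ge_atTop ((|u 0| + B) / ε)))).exists
    have hR0 : 0 < R := by linarith
    have hRp : 0 < R ^ p := by positivity
    rw [div_le_iff₀ hε] at hRB
    have hv := hu.scale hq 0 hR0
    have h1 := havg _ hv (ε * R ^ p) B (by positivity) hB (by
      intro y
      have := hlow (0 + R • y)
      rw [zero_add, norm_smul, Real.norm_of_nonneg hR0.le,
        Real.mul_rpow hR0.le (norm_nonneg _)] at this
      simp only [zero_add]
      linarith)
    simp only [smul_zero, add_zero] at h1
    have h2 := holder_scaled hH hv (T := C * (2 * ε * R ^ p)) (by positivity)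
      (h1.trans (mul_le_mul_of_nonneg_left (by linarith) hC.le)) (y := R⁻¹ • x) (by
        rw [norm_smul, Real.norm_of_nonneg (by positivity), inv_mul_le_iff₀ hR0]; linarith)
    simp only [smul_zero, add_zero, zero_add, smul_inv_smul₀ hR0.ne'] at h2
    rw [norm_smul, Real.norm_of_nonneg (by positivity), Real.mul_rpow (by positivity)
      (norm_nonneg _), Real.inv_rpow hR0.le] at h2
    refine h2.trans (le_of_eq ?_)
    field_simp
  by_contra hne
  have hd : 0 < |u 0 - u x| := abs_pos.2 (sub_ne_zero.2 (Ne.symm hne))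
  set M := H * C * ‖x‖ ^ p with hM
  have hM0 : 0 ≤ M := by positivity
  have h := main1 (|u 0 - u x| / (4 * (M + 1))) (by positivity)
  have e : M * (2 * (|u 0 - u x| / (4 * (M + 1)))) = |u 0 - u x| * (M / (2 * (M + 1))) := by
    field_simp; ring
  rw [e] at h
  have h5 : M / (2 * (M + 1)) < 1 := by rw [div_lt_one (by positivity)]; linarith
  nlinarith

end FL

/-- Liouville theorem for the fractional Laplacian.  If
`u ∈ L¹_s(ℝⁿ)` is continuous, `s`-harmonic at every point of `ℝⁿ` and
satisfies `liminf_{|x|→∞} u(x)/|x|^γ ≥ 0` for some `γ ∈ [0,1]` with `γ < 2s`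
(expressed below by: for every `ε > 0`, eventually along the cocompact filter
`u(x)/|x|^γ ≥ −ε`), then `u` is constant. -/
theorem fractional_liouville
    (n : ℕ) (hn : 1 ≤ n) (s : ℝ) (hs : s ∈ Set.Ioo (0:ℝ) 1)
    (γ : ℝ) (hγ0 : 0 ≤ γ) (hγ1 : γ ≤ 1) (hγs : γ < 2 * s)
    (u : EuclideanSpace ℝ (Fin n) → ℝ)
    (hloc : MeasureTheory.LocallyIntegrable u)
    (hL1s : MeasureTheory.Integrable (fun y : EuclideanSpace ℝ (Fin n) =>
      |u y| / (1 + ‖y‖ ^ ((n : ℝ) + 2 * s))))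
    (hcont : Continuous u)
    (hharm : ∀ x : EuclideanSpace ℝ (Fin n),
      Filter.Tendsto
        (fun ε : ℝ => ∫ y in {y : EuclideanSpace ℝ (Fin n) | ε < ‖y - x‖},
          (u x - u y) / ‖x - y‖ ^ ((n : ℝ) + 2 * s))
        (𝓝[>] (0:ℝ)) (𝓝 0))
    (hgrow : ∀ ε : ℝ, 0 < ε →
      ∀ᶠ x in Filter.cocompact (EuclideanSpace ℝ (Fin n)), -ε ≤ u x / ‖x‖ ^ γ) :
    ∃ c : ℝ, ∀ x, u x = c := by
  refine ⟨u 0, FL.main hn (α := 2 * s) (by linarith [hs.1]) (by linarith [hs.2]) hγ0 hγ1 hγs ?_ hgrow⟩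
  exact FL.build hn (by have := hs.1; positivity) hL1s hcont hharm
end

section
/- Let n ≥ 1, s ∈ (0,1), and α ∈ (2s, 1]. There exists a constant C > 0 depending only on n, s, α such that: for every bounded function u : ℝⁿ → ℝ with [u]_{C^{0,α}} < ∞, the integral v(x) := ∫_{ℝⁿ} (u(x) − u(y))/|x−y|^{n+2s} dy converges absolutely for every x ∈ ℝⁿ, and [v]_{C^{0,α−2s}} ≤ C [u]_{C^{0,α}}. (That is, if u ∈ C^{0,α}(ℝⁿ) with α > 2s, then (−Δ)^s u ∈ C^{0,α−2s}(ℝⁿ), with the corresponding seminorm estimate.) -/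
open MeasureTheory Filter Metric Set
open scoped Topology

theorem fracAux_integrable (n : ℕ) (hn : 1 ≤ n) (s : ℝ) (hs : 0 < s)
    (α : ℝ) (hα1 : 2 * s < α) :
    Integrable (fun h : EuclideanSpace ℝ (Fin n) =>
      (min ‖h‖ 1) ^ α / ‖h‖ ^ ((n : ℝ) + 2 * s)) := by
  haveI : Nonempty (Fin n) := ⟨⟨0, hn⟩⟩
  have key := integrable_fun_norm_addHaar (E := EuclideanSpace ℝ (Fin n)) (volume)
    (f := fun t : ℝ => (min t 1) ^ α / t ^ ((n : ℝ) + 2 * s))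
  rw [key]
  have hpow : ∀ y : ℝ, y ^ (Module.finrank ℝ (EuclideanSpace ℝ (Fin n)) - 1)
      = y ^ ((n : ℝ) - 1) := by
    intro y
    rw [finrank_euclideanSpace_fin, ← Real.rpow_natCast, Nat.cast_sub hn, Nat.cast_one]
  have hU : Ioi (0 : ℝ) = Ioc 0 1 ∪ Ioi 1 := (Ioc_union_Ioi_eq_Ioi zero_le_one).symm
  rw [hU, integrableOn_union]
  constructor
  · have h1 : IntegrableOn (fun y : ℝ => y ^ (α - 2 * s - 1)) (Ioc 0 1) := by
      rw [← intervalIntegrable_iff_integrableOn_Ioc_of_le zero_le_one]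
      exact intervalIntegral.intervalIntegrable_rpow' (by linarith)
    refine h1.congr_fun ?_ measurableSet_Ioc
    intro y hy
    simp only [smul_eq_mul]
    rw [hpow, min_eq_left hy.2, ← mul_div_assoc, ← Real.rpow_add hy.1, ← Real.rpow_sub hy.1]
    congr 1; ring
  · have h1 : IntegrableOn (fun y : ℝ => y ^ (-1 - 2 * s)) (Ioi 1) :=
      integrableOn_Ioi_rpow_of_lt (by linarith) zero_lt_one
    refine h1.congr_fun ?_ measurableSet_Ioi
    intro y hy
    have hy0 : (0 : ℝ) < y := lt_trans zero_lt_one hy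
    simp only [smul_eq_mul]
    rw [hpow, min_eq_right (le_of_lt hy), Real.one_rpow, ← mul_div_assoc, mul_one,
      ← Real.rpow_sub hy0]
    congr 1; ring

theorem fracAux_scale (n : ℕ) (s α r : ℝ) (hr : 0 < r)
    (h : EuclideanSpace ℝ (Fin n)) :
    (min ‖h‖ r) ^ α / ‖h‖ ^ ((n : ℝ) + 2 * s) =
      r ^ (α - ((n : ℝ) + 2 * s)) *
        ((min ‖r⁻¹ • h‖ 1) ^ α / ‖r⁻¹ • h‖ ^ ((n : ℝ) + 2 * s)) := by
  have hn : ‖h‖ = r * ‖r⁻¹ • h‖ := by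
    rw [norm_smul, norm_inv, Real.norm_of_nonneg hr.le]; field_simp
  have hm : min ‖h‖ r = r * min ‖r⁻¹ • h‖ 1 := by
    rw [mul_min_of_nonneg _ _ hr.le, ← hn, mul_one]
  rw [hm, hn, Real.mul_rpow hr.le (by positivity), Real.mul_rpow hr.le (by positivity),
    Real.rpow_sub hr]
  rw [mul_div_mul_comm]

theorem fracAux_min {a b c α K : ℝ} (ha : 0 ≤ a) (hb : 0 ≤ b)
    (h1 : c ≤ K * a ^ α) (h2 : c ≤ K * b ^ α) : c ≤ K * (min a b) ^ α := by
  rcases min_choice a b with h | h <;> rw [h] <;> assumption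

/-- If `u ∈ C^{0,α}(ℝⁿ)` is bounded with `α ∈ (2s,1]`, then the
singular integral `v(x) = ∫ (u(x) − u(y))/|x−y|^{n+2s} dy` converges absolutely
at every point and `[v]_{C^{0,α−2s}} ≤ C [u]_{C^{0,α}}`, with `C` depending
only on `n, s, α` (here `K` is any Hölder constant for `u`). -/
theorem fractionalLaplacian_holder_estimate
    (n : ℕ) (hn : 1 ≤ n) (s : ℝ) (hs : s ∈ Set.Ioo (0:ℝ) 1)
    (α : ℝ) (hα1 : 2 * s < α) (hα2 : α ≤ 1) :
    ∃ C : ℝ, 0 < C ∧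
      ∀ (u : EuclideanSpace ℝ (Fin n) → ℝ) (M K : ℝ),
        (∀ x, |u x| ≤ M) → 0 ≤ K →
        (∀ x y, |u x - u y| ≤ K * ‖x - y‖ ^ α) →
        (∀ x : EuclideanSpace ℝ (Fin n),
          MeasureTheory.Integrable (fun y : EuclideanSpace ℝ (Fin n) =>
            (u x - u y) / ‖x - y‖ ^ ((n : ℝ) + 2 * s))) ∧
        ∀ x y : EuclideanSpace ℝ (Fin n),
          |(∫ z : EuclideanSpace ℝ (Fin n), (u x - u z) / ‖x - z‖ ^ ((n : ℝ) + 2 * s)) -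
              ∫ z : EuclideanSpace ℝ (Fin n), (u y - u z) / ‖y - z‖ ^ ((n : ℝ) + 2 * s)|
            ≤ C * K * ‖x - y‖ ^ (α - 2 * s) := by
  obtain ⟨hs0, hs1⟩ := hs
  have hα0 : 0 < α := by linarith
  set g : EuclideanSpace ℝ (Fin n) → ℝ := fun h =>
      (min ‖h‖ 1) ^ α / ‖h‖ ^ ((n : ℝ) + 2 * s) with hg
  have hgi : Integrable g := fracAux_integrable n hn s hs0 α hα1
  have hg0 : 0 ≤ ∫ h, g h := integral_nonneg fun h => by simp only [hg]; positivity
  refine ⟨2 * (∫ h, g h) + 1, by linarith, ?_⟩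
  intro u M K hM hK hu
  have hM0 : 0 ≤ M := (abs_nonneg _).trans (hM 0)
  have hcont : Continuous u := by
    rw [continuous_iff_continuousAt]
    intro x
    rw [ContinuousAt, tendsto_iff_dist_tendsto_zero]
    have hlim : Tendsto (fun y => K * ‖y - x‖ ^ α) (𝓝 x) (𝓝 0) := by
      have hc : Continuous (fun y : EuclideanSpace ℝ (Fin n) => K * ‖y - x‖ ^ α) :=
        continuous_const.mul ((continuous_id.sub continuous_const).norm.rpow_const
          (fun _ => Or.inr hα0.le))
      have := hc.tendsto x
      simpa [Real.zero_rpow hα0.ne'] using this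
    exact squeeze_zero (fun _ => dist_nonneg) (fun y => by rw [Real.dist_eq]; exact hu y x) hlim
  -- translated integrand
  have hint : ∀ x : EuclideanSpace ℝ (Fin n),
      Integrable (fun h => (u x - u (x + h)) / ‖h‖ ^ ((n : ℝ) + 2 * s)) := by
    intro x
    refine (hgi.const_mul (K + 2 * M)).mono' ?_ ?_
    · have hm : Measurable (fun h => u x - u (x + h)) := by
        exact (continuous_const.sub (hcont.comp (continuous_const.add continuous_id))).measurable
      exact (hm.div (measurable_norm.pow_const _)).aestronglyMeasurable
    · refine Eventually.of_forall fun h => ?_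
      have hp : 0 ≤ ‖h‖ ^ ((n : ℝ) + 2 * s) := by positivity
      rw [Real.norm_eq_abs, abs_div, abs_of_nonneg hp, hg, ← mul_div_assoc]
      refine div_le_div_of_nonneg_right ?_ hp
      refine fracAux_min (norm_nonneg _) zero_le_one ?_ ?_
      · have h1 := hu x (x + h)
        rw [sub_add_cancel_left, norm_neg] at h1
        have : 0 ≤ ‖h‖ ^ α := by positivity
        nlinarith
      · rw [Real.one_rpow]
        have h1 := abs_sub (u x) (u (x + h))
        have h2 := hM x
        have h3 := hM (x + h)
        linarith
  have hshift : ∀ x z : EuclideanSpace ℝ (Fin n),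
      (u x - u (x + z)) / ‖x - (x + z)‖ ^ ((n : ℝ) + 2 * s) =
      (u x - u (x + z)) / ‖z‖ ^ ((n : ℝ) + 2 * s) := by
    intro x z
    rw [sub_add_cancel_left, norm_neg]
  refine ⟨fun x => ?_, fun x y => ?_⟩
  · have h1 := (hint x).comp_add_left (-x)
    refine h1.congr (Eventually.of_forall fun z => ?_)
    simp only [add_neg_cancel_left]
    rw [neg_add_eq_sub, norm_sub_rev]
  · have hI : ∀ x : EuclideanSpace ℝ (Fin n),
        (∫ z, (u x - u z) / ‖x - z‖ ^ ((n : ℝ) + 2 * s)) =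
        ∫ h, (u x - u (x + h)) / ‖h‖ ^ ((n : ℝ) + 2 * s) := by
      intro x
      rw [← integral_add_left_eq_self _ x]
      exact integral_congr_ae (Eventually.of_forall fun z => hshift x z)
    rcases eq_or_ne x y with rfl | hxy
    · simp only [sub_self, abs_zero]; positivity
    have hr : 0 < ‖x - y‖ := norm_pos_iff.2 (sub_ne_zero.2 hxy)
    rw [hI x, hI y, ← integral_sub (hint x) (hint y)]
    generalize hrr : ‖x - y‖ = r at hr
    have hgr : Integrable (fun h => g (r⁻¹ • h)) := hgi.comp_smul (inv_ne_zero hr.ne')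
    have hb : |∫ h, ((u x - u (x + h)) / ‖h‖ ^ ((n : ℝ) + 2 * s) -
        (u y - u (y + h)) / ‖h‖ ^ ((n : ℝ) + 2 * s))| ≤
        ∫ h, (2 * K) * (r ^ (α - ((n : ℝ) + 2 * s)) * g (r⁻¹ • h)) := by
      rw [← Real.norm_eq_abs]
      refine norm_integral_le_of_norm_le ((hgr.const_mul _).const_mul _) ?_
      refine Eventually.of_forall fun h => ?_
      have hp : 0 ≤ ‖h‖ ^ ((n : ℝ) + 2 * s) := by positivity
      simp only [hg]
      rw [← fracAux_scale n s α r hr h, ← sub_div, Real.norm_eq_abs, abs_div, abs_of_nonneg hp,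
        ← mul_div_assoc]
      refine div_le_div_of_nonneg_right ?_ hp
      refine fracAux_min (norm_nonneg _) hr.le ?_ ?_
      · have h1 := hu x (x + h)
        have h2 := hu y (y + h)
        rw [sub_add_cancel_left, norm_neg] at h1 h2
        have h3 := abs_sub (u x - u (x + h)) (u y - u (y + h))
        linarith
      · have h1 := hu x y
        have h2 := hu (x + h) (y + h)
        rw [add_sub_add_right_eq_sub] at h2
        rw [hrr] at h1 h2
        have h3 := abs_sub (u x - u y) (u (x + h) - u (y + h))
        have h4 : (u x - u (x + h)) - (u y - u (y + h)) =
          (u x - u y) - (u (x + h) - u (y + h)) := by ring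
        rw [h4]
        linarith
    refine hb.trans ?_
    rw [integral_const_mul, integral_const_mul, Measure.integral_comp_inv_smul,
      finrank_euclideanSpace_fin, smul_eq_mul, abs_of_nonneg (by positivity),
      ← Real.rpow_natCast r n]
    have he : r ^ (α - ((n : ℝ) + 2 * s)) * r ^ (n : ℝ) = r ^ (α - 2 * s) := by
      rw [← Real.rpow_add hr]; congr 1; ring
    rw [← mul_assoc (r ^ (α - ((n : ℝ) + 2 * s))), he]
    have hpos : 0 ≤ K * r ^ (α - 2 * s) := by positivity
    nlinarith
end

section
/- Let n ≥ 1, s ∈ (0,1), and α ∈ (0, 2s) with α > 2s − 1. There exists a constant C > 0 depending only on n, s, α such that: for every bounded C¹ function u : ℝⁿ → ℝ with bounded gradient and [u]_{C^{1,α}} < ∞, the integral v(x) := (1/2) ∫_{ℝⁿ} (2u(x) − u(x+y) − u(x−y))/|y|^{n+2s} dy converges absolutely for every x ∈ ℝⁿ, and [v]_{C^{0, 1+α−2s}} ≤ C [u]_{C^{1,α}}. (That is, if u ∈ C^{1,α}(ℝⁿ) with α < 2s, then (−Δ)^s u ∈ C^{0, α−2s+1}(ℝⁿ), with the corresponding seminorm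 estimate.) -/
open MeasureTheory Filter Metric Set
open scoped Topology


lemma aux_phi {n : ℕ} (u : EuclideanSpace ℝ (Fin n) → ℝ) (K α : ℝ) (hu : ContDiff ℝ 1 u)
    (hK : ∀ x y, ‖fderiv ℝ u x - fderiv ℝ u y‖ ≤ K * ‖x - y‖ ^ α)
    (z p q : EuclideanSpace ℝ (Fin n)) :
    |(u (p + z) - u p) - (u (q + z) - u q)| ≤ K * ‖z‖ ^ α * ‖p - q‖ := by
  have hd : Differentiable ℝ u := hu.differentiable (by norm_num)
  have h := Convex.norm_image_sub_le_of_norm_hasFDerivWithin_le (𝕜 := ℝ) (s := Set.univ)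
    (f := fun p => u (p + z) - u p) (f' := fun p => fderiv ℝ u (p + z) - fderiv ℝ u p)
    (C := K * ‖z‖ ^ α) (x := q) (y := p) ?_ ?_ convex_univ (Set.mem_univ _) (Set.mem_univ _)
  · simpa [Real.norm_eq_abs] using h
  · intro x _
    apply HasFDerivAt.hasFDerivWithinAt
    apply HasFDerivAt.sub
    · have h1 := (hd (x + z)).hasFDerivAt
      exact (hasFDerivAt_comp_add_right z).2 h1
    · exact (hd x).hasFDerivAt
  · intro x _
    simpa using hK (x + z) x

lemma aux_int {n : ℕ} (hn : 1 ≤ n) (s a b : ℝ) (ha : 2 * s < a) (hb : b < 2 * s) :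
    MeasureTheory.Integrable (fun z : EuclideanSpace ℝ (Fin n) =>
      min (‖z‖ ^ a) (‖z‖ ^ b) / ‖z‖ ^ ((n : ℝ) + 2 * s)) := by
  haveI : Nonempty (Fin n) := ⟨⟨0, hn⟩⟩
  have := (MeasureTheory.integrable_fun_norm_addHaar
    (volume : Measure (EuclideanSpace ℝ (Fin n)))
    (f := fun t : ℝ => min (t ^ a) (t ^ b) / t ^ ((n : ℝ) + 2 * s)))
  apply this.2
  have hm : Measurable (fun t : ℝ => t ^ (Module.finrank ℝ (EuclideanSpace ℝ (Fin n)) - 1) •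
      (min (t ^ a) (t ^ b) / t ^ ((n : ℝ) + 2 * s))) := by
    fun_prop
  have key : ∀ t : ℝ, 0 < t → ∀ c : ℝ,
      t ^ (n - 1) * (t ^ c / t ^ ((n : ℝ) + 2 * s)) = t ^ (c - 1 - 2 * s) := by
    intro t ht c
    rw [← Real.rpow_natCast, ← Real.rpow_sub ht, ← Real.rpow_add ht]
    congr 1
    push_cast [hn]
    ring
  rw [← Set.Ioc_union_Ioi_eq_Ioi (zero_le_one' ℝ)]
  apply IntegrableOn.union
  · have h1 : IntegrableOn (fun t : ℝ => t ^ (a - 1 - 2 * s)) (Set.Ioc 0 1) := by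
      rw [← intervalIntegrable_iff_integrableOn_Ioc_of_le zero_le_one]
      exact intervalIntegral.intervalIntegrable_rpow' (by linarith)
    refine Integrable.mono' h1 hm.aestronglyMeasurable ?_
    refine (ae_restrict_iff' measurableSet_Ioc).2 (Eventually.of_forall fun t ht => ?_)
    have ht0 : 0 < t := ht.1
    rw [Real.norm_of_nonneg (by simp only [smul_eq_mul]; positivity), ← key t ht0 a]
    simp only [finrank_euclideanSpace, Fintype.card_fin, smul_eq_mul]
    gcongr
    exact min_le_left _ _
  · have h1 : IntegrableOn (fun t : ℝ => t ^ (b - 1 - 2 * s)) (Set.Ioi 1) :=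
      integrableOn_Ioi_rpow_of_lt (by linarith) one_pos
    refine Integrable.mono' h1 hm.aestronglyMeasurable ?_
    refine (ae_restrict_iff' measurableSet_Ioi).2 (Eventually.of_forall fun t ht => ?_)
    have ht0 : 0 < t := lt_trans one_pos ht
    rw [Real.norm_of_nonneg (by simp only [smul_eq_mul]; positivity), ← key t ht0 b]
    simp only [finrank_euclideanSpace, Fintype.card_fin, smul_eq_mul]
    gcongr
    exact min_le_right _ _

/-- If `u ∈ C^{1,α}(ℝⁿ)` is bounded with bounded gradient and
`α ∈ (2s−1, 2s) ∩ (0,2s)`, then the second-difference integral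
`v(x) = (1/2)∫ (2u(x) − u(x+y) − u(x−y))/|y|^{n+2s} dy` converges absolutely at
every point and `[v]_{C^{0,1+α−2s}} ≤ C [u]_{C^{1,α}}`, with `C` depending only
on `n, s, α` (here `K` is any Hölder constant for the gradient of `u`). -/
theorem fractionalLaplacian_C1alpha_estimate
    (n : ℕ) (hn : 1 ≤ n) (s : ℝ) (hs : s ∈ Set.Ioo (0:ℝ) 1)
    (α : ℝ) (hα0 : 0 < α) (hα1 : α < 2 * s) (hα2 : 2 * s - 1 < α) :
    ∃ C : ℝ, 0 < C ∧
      ∀ (u : EuclideanSpace ℝ (Fin n) → ℝ) (M M' K : ℝ),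
        (∀ x, |u x| ≤ M) →
        ContDiff ℝ 1 u →
        (∀ x, ‖fderiv ℝ u x‖ ≤ M') → 0 ≤ K →
        (∀ x y, ‖fderiv ℝ u x - fderiv ℝ u y‖ ≤ K * ‖x - y‖ ^ α) →
        (∀ x : EuclideanSpace ℝ (Fin n),
          MeasureTheory.Integrable (fun y : EuclideanSpace ℝ (Fin n) =>
            (2 * u x - u (x + y) - u (x - y)) / ‖y‖ ^ ((n : ℝ) + 2 * s))) ∧
        ∀ x y : EuclideanSpace ℝ (Fin n),
          |(1 / 2) * (∫ z : EuclideanSpace ℝ (Fin n),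
                (2 * u x - u (x + z) - u (x - z)) / ‖z‖ ^ ((n : ℝ) + 2 * s)) -
              (1 / 2) * ∫ z : EuclideanSpace ℝ (Fin n),
                (2 * u y - u (y + z) - u (y - z)) / ‖z‖ ^ ((n : ℝ) + 2 * s)|
            ≤ C * K * ‖x - y‖ ^ (1 + α - 2 * s) := by
  set G : EuclideanSpace ℝ (Fin n) → ℝ := fun z =>
      min (‖z‖ ^ (1 + α)) (‖z‖ ^ α) / ‖z‖ ^ ((n : ℝ) + 2 * s) with hG
  have hGint : Integrable G := aux_int hn s (1 + α) α (by linarith) hα1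
  have hG0 : ∀ z, 0 ≤ G z := fun z => by simp only [hG]; positivity
  have hI0 : 0 ≤ ∫ z, G z := integral_nonneg hG0
  refine ⟨(∫ z, G z) + 1, by linarith, ?_⟩
  intro u M M' K hM hu hM' hK0 hK
  have hphi := aux_phi u K α hu hK
  have hM0 : 0 ≤ M := (abs_nonneg _).trans (hM 0)
  have hcont : Continuous u := hu.continuous
  have hD1 : ∀ x z, |2 * u x - u (x + z) - u (x - z)| ≤ K * ‖z‖ ^ (1 + α) := by
    intro x z
    have h := hphi z x (x - z)
    rw [sub_add_cancel, sub_sub_cancel] at h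
    rw [abs_sub_comm] at h
    rw [Real.rpow_add' (norm_nonneg z) (by linarith), Real.rpow_one]
    calc _ = |u x - u (x - z) - (u (x + z) - u x)| := by congr 1; ring
      _ ≤ _ := h
      _ = _ := by ring
  have hint : ∀ x : EuclideanSpace ℝ (Fin n),
          MeasureTheory.Integrable (fun y : EuclideanSpace ℝ (Fin n) =>
            (2 * u x - u (x + y) - u (x - y)) / ‖y‖ ^ ((n : ℝ) + 2 * s)) := by
    intro x
    have h1 := (aux_int hn s (1 + α) 0 (by linarith) (by linarith [hs.1])).const_mul (K + 4 * M)
    refine h1.mono' ?_ (Eventually.of_forall fun z => ?_)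
    · apply Measurable.aestronglyMeasurable
      have : Measurable u := hcont.measurable
      fun_prop
    · rw [norm_div, Real.norm_eq_abs, Real.norm_of_nonneg (by positivity : 0 ≤ ‖z‖ ^ ((n : ℝ) + 2 * s)),
        ← mul_div_assoc]
      gcongr
      rw [mul_min_of_nonneg _ _ (by positivity), Real.rpow_zero]
      apply le_min
      · refine (hD1 x z).trans ?_
        gcongr
        linarith
      · have a1 := abs_le.1 (hM x)
        have a2 := abs_le.1 (hM (x + z))
        have a3 := abs_le.1 (hM (x - z))
        rw [abs_le]
        constructor <;> linarith
  refine ⟨hint, ?_⟩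
  intro x y
  rcases eq_or_ne x y with rfl | hxy
  · simp only [sub_self, abs_zero]
    positivity
  set r := ‖x - y‖ with hr
  have hr0 : 0 < r := norm_pos_iff.2 (sub_ne_zero.2 hxy)
  have hGr : Integrable (fun z => G (r⁻¹ • z)) := hGint.comp_smul (inv_ne_zero hr0.ne')
  have hD2 : ∀ z, |(2 * u x - u (x + z) - u (x - z)) - (2 * u y - u (y + z) - u (y - z))|
      ≤ 2 * K * min (‖z‖ ^ (1 + α)) (r * ‖z‖ ^ α) := by
    intro z
    rw [mul_min_of_nonneg _ _ (by positivity)]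
    apply le_min
    · have := abs_sub (2 * u x - u (x + z) - u (x - z)) (2 * u y - u (y + z) - u (y - z))
      linarith [hD1 x z, hD1 y z]
    · have b1 := abs_le.1 (hphi z x y)
      have b2 := abs_le.1 (hphi z (x - z) (y - z))
      rw [sub_sub_sub_cancel_right, sub_add_cancel, sub_add_cancel] at b2
      rw [← hr] at b1 b2
      rw [abs_le]
      constructor <;> linarith
  have hscale : ∀ z, min (‖z‖ ^ (1 + α)) (r * ‖z‖ ^ α) / ‖z‖ ^ ((n : ℝ) + 2 * s)
      = r ^ (1 + α - ((n : ℝ) + 2 * s)) * G (r⁻¹ • z) := by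
    intro z
    obtain ⟨t, ht0, ht⟩ : ∃ t : ℝ, 0 ≤ t ∧ ‖z‖ = r * t :=
      ⟨r⁻¹ * ‖z‖, by positivity, by field_simp⟩
    have hz : ‖r⁻¹ • z‖ = t := by
      rw [norm_smul, norm_inv, Real.norm_of_nonneg hr0.le, ht]; field_simp
    simp only [hG, hz, ht]
    rw [Real.mul_rpow hr0.le ht0, Real.mul_rpow hr0.le ht0, Real.mul_rpow hr0.le ht0,
      Real.rpow_sub hr0, ← mul_assoc r, show r * r ^ α = r ^ (1 + α) by
        rw [Real.rpow_add hr0, Real.rpow_one],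
      ← mul_min_of_nonneg _ _ (by positivity)]
    rw [mul_div_mul_comm]
  have hIr : ∫ z, G (r⁻¹ • z) = r ^ (n : ℝ) * ∫ z, G z := by
    rw [Measure.integral_comp_inv_smul_of_nonneg _ _ hr0.le]
    simp
  rw [← mul_sub, ← integral_sub (hint x) (hint y), abs_mul]
  have hfin : |∫ z, ((2 * u x - u (x + z) - u (x - z)) / ‖z‖ ^ ((n : ℝ) + 2 * s) -
      (2 * u y - u (y + z) - u (y - z)) / ‖z‖ ^ ((n : ℝ) + 2 * s))|
      ≤ ∫ z, 2 * K * r ^ (1 + α - ((n : ℝ) + 2 * s)) * G (r⁻¹ • z) := by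
    rw [← Real.norm_eq_abs]
    refine norm_integral_le_of_norm_le (hGr.const_mul _) (Eventually.of_forall fun z => ?_)
    rw [mul_assoc, ← hscale, ← sub_div, norm_div, Real.norm_eq_abs,
      Real.norm_of_nonneg (by positivity : 0 ≤ ‖z‖ ^ ((n : ℝ) + 2 * s)), ← mul_div_assoc]
    gcongr
    exact hD2 z
  rw [integral_const_mul, hIr] at hfin
  have hpow : r ^ (1 + α - ((n : ℝ) + 2 * s)) * r ^ (n : ℝ) = r ^ (1 + α - 2 * s) := by
    rw [← Real.rpow_add hr0]; congr 1; ring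
  calc _ ≤ |(1 / 2 : ℝ)| * (2 * K * r ^ (1 + α - ((n : ℝ) + 2 * s)) * (r ^ (n : ℝ) * ∫ z, G z)) := by
        gcongr
    _ = (∫ z, G z) * K * (r ^ (1 + α - ((n : ℝ) + 2 * s)) * r ^ (n : ℝ)) := by
        rw [abs_of_pos (by norm_num)]; ring
    _ ≤ _ := by
        rw [hpow]
        gcongr
        linarith
end
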